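/- arXiv:2108.08629 — 5 statements merged into one kernel-verified Lean document; each statement's English description precedes it below -/
import Mathlib

section
/- Let α be a real number, let f ∈ X_α and g ∈ X_{-α}, with Taylor coefficients (f_n)_{n≥0} and (g_n)_{n≥0} respectively. Then the series ∑_{n≥0} f_n·conj(g_n) converges absolutely, and lim_{r→1⁻} ∫_𝕋 f(rζ)·conj(g(rζ)) dm(ζ) = ∑_{n≥0} f_n·conj(g_n), where f_r(ζ) = f(rζ) and g_r(ζ) = g(rζ) denote the dilations of f and g. -/
/-!
For `0 < r < 1` the Taylor series of `f` and `g` converge absolutely on the circle of radius `r`, so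
`f(rζ) conj(g(rζ))` expands as an absolutely convergent double series that can be integrated
term by term (`hasSum_integral_of_summable_integral_norm`). Orthonormality of the monomials
(`integral_mT_monomial`) leaves `∑ aₙ conj(bₙ) r²ⁿ`. With the weight `wₙ = (n + 1) ^ α`,
`‖aₙ bₙ‖ ≤ (wₙ ‖aₙ‖² + wₙ⁻¹ ‖bₙ‖²) / 2` by AM-GM, which gives absolute convergence, and dominated
convergence for series lets `r → 1⁻`.
-/

open MeasureTheory
open scoped ENNReal NNReal

/-- Normalized arclength measure on the unit circle `𝕋 ⊆ ℂ`, so that `m(𝕋) = 1`. -/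
noncomputable def mT : Measure ℂ :=
  (ENNReal.ofReal (2 * Real.pi))⁻¹ •
    (Measure.map (fun θ : ℝ => Complex.exp (θ * Complex.I))
      (volume.restrict (Set.Ioc (0 : ℝ) (2 * Real.pi))))

lemma measurable_circleExp : Measurable (fun θ : ℝ => Complex.exp (θ * Complex.I)) :=
  Continuous.measurable (by fun_prop)

instance isProbabilityMeasure_mT : IsProbabilityMeasure mT := by
  constructor
  have h : ENNReal.ofReal (2 * Real.pi) ≠ 0 := by
    simp [Real.pi_pos]
  rw [mT, Measure.smul_apply, Measure.map_apply measurable_circleExp MeasurableSet.univ]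
  simp only [Set.preimage_univ, Measure.restrict_apply_univ, Real.volume_Ioc, sub_zero,
    smul_eq_mul]
  exact ENNReal.inv_mul_cancel h ENNReal.ofReal_ne_top

lemma ae_mT_norm_eq_one : ∀ᵐ ζ ∂mT, ‖ζ‖ = 1 := by
  refine Measure.ae_smul_measure ?_ _
  rw [ae_map_iff measurable_circleExp.aemeasurable
    (measurableSet_eq_fun measurable_norm measurable_const)]
  exact Filter.Eventually.of_forall fun θ => Complex.norm_exp_ofReal_mul_I θ

/-- Orthonormality of the monomials `ζ ^ n` in `L²(𝕋)`. -/
lemma integral_mT_monomial (n m : ℕ) :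
    ∫ ζ : ℂ, ζ ^ n * (starRingEnd ℂ) ζ ^ m ∂mT = if n = m then 1 else 0 := by
  split_ifs with h
  · subst h
    have : ∀ᵐ ζ ∂mT, ζ ^ n * (starRingEnd ℂ) ζ ^ n = (1 : ℂ) := by
      filter_upwards [ae_mT_norm_eq_one] with ζ hζ
      rw [← mul_pow, Complex.mul_conj, Complex.normSq_eq_norm_sq, hζ]
      simp
    rw [integral_congr_ae this]
    simp
  · rw [mT, integral_smul_measure, integral_map measurable_circleExp.aemeasurable
      (Continuous.aestronglyMeasurable (by fun_prop))]
    have hc : ((n : ℂ) - m) * Complex.I ≠ 0 := by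
      refine mul_ne_zero (sub_ne_zero.2 ?_) Complex.I_ne_zero
      exact_mod_cast h
    have key : ∀ θ : ℝ, Complex.exp (θ * Complex.I) ^ n *
        (starRingEnd ℂ) (Complex.exp (θ * Complex.I)) ^ m
        = Complex.exp (((n : ℂ) - m) * Complex.I * θ) := by
      intro θ
      rw [← Complex.exp_conj, ← Complex.exp_nat_mul, ← Complex.exp_nat_mul, ← Complex.exp_add]
      congr 1
      simp only [map_mul, Complex.conj_ofReal, Complex.conj_I]
      ring
    simp only [key]
    rw [← intervalIntegral.integral_of_le (by positivity), integral_exp_mul_complex hc]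
    have h1 : Complex.exp (((n : ℂ) - m) * Complex.I * ((2 * Real.pi : ℝ) : ℂ)) = 1 := by
      rw [Complex.exp_eq_one_iff]
      exact ⟨(n : ℤ) - m, by push_cast; ring⟩
    rw [h1]
    simp

/-- On a circle of radius `r < 1` the integral pairing of `f` and `g` is the Abel-type sum
`∑ aₙ conj(bₙ) r²ⁿ`. -/
lemma integral_mT_dilation (f g : ℂ → ℂ) (a b : ℕ → ℂ)
    (hf : ∀ z ∈ Metric.ball (0 : ℂ) 1, HasSum (fun n : ℕ => a n * z ^ n) (f z))
    (hg : ∀ z ∈ Metric.ball (0 : ℂ) 1, HasSum (fun n : ℕ => b n * z ^ n) (g z))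
    (r : ℝ) (hr0 : 0 < r) (hr1 : r < 1) :
    ∫ ζ : ℂ, f ((r : ℂ) * ζ) * (starRingEnd ℂ) (g ((r : ℂ) * ζ)) ∂mT
      = ∑' n : ℕ, a n * (starRingEnd ℂ) (b n) * (r : ℂ) ^ (2 * n) := by
  have hrn : ‖(r : ℂ)‖ = r := by simp [abs_of_pos hr0]
  have hrb : (r : ℂ) ∈ Metric.ball (0 : ℂ) 1 := by
    rw [mem_ball_zero_iff, hrn]
    exact hr1
  have sa : Summable fun n => ‖a n * (r : ℂ) ^ n‖ := (hf _ hrb).summable.norm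
  have sb : Summable fun n => ‖b n * (r : ℂ) ^ n‖ := (hg _ hrb).summable.norm
  set c : ℕ × ℕ → ℂ :=
    fun p => (a p.1 * (r : ℂ) ^ p.1) * (starRingEnd ℂ) (b p.2 * (r : ℂ) ^ p.2) with hc
  have sc : Summable fun p => ‖c p‖ := by
    have := sa.mul_of_nonneg sb (fun _ => norm_nonneg _) (fun _ => norm_nonneg _)
    refine this.congr fun p => ?_
    simp only [hc, norm_mul _ ((starRingEnd ℂ) _), RCLike.norm_conj]
  let F : ℕ × ℕ → ℂ → ℂ := fun p ζ => c p * (ζ ^ p.1 * (starRingEnd ℂ) ζ ^ p.2)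
  have hFn : ∀ p, ∀ ζ : ℂ, ‖ζ‖ = 1 → ‖F p ζ‖ = ‖c p‖ := by
    intro p ζ hζ
    simp [F, hζ]
  have hFi : ∀ p, Integrable (F p) mT := by
    intro p
    refine Integrable.of_bound (C := ‖c p‖)
      (Continuous.aestronglyMeasurable (by fun_prop)) ?_
    filter_upwards [ae_mT_norm_eq_one] with ζ hζ using (hFn p ζ hζ).le
  have hFs : Summable fun p => ∫ ζ, ‖F p ζ‖ ∂mT := by
    refine sc.congr fun p => ?_
    have : ∀ᵐ ζ ∂mT, ‖F p ζ‖ = ‖c p‖ := by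
      filter_upwards [ae_mT_norm_eq_one] with ζ hζ using hFn p ζ hζ
    rw [integral_congr_ae this]
    simp
  have hsum := hasSum_integral_of_summable_integral_norm hFi hFs
  have hpt : ∀ᵐ ζ ∂mT, ∑' p, F p ζ = f ((r : ℂ) * ζ) * (starRingEnd ℂ) (g ((r : ℂ) * ζ)) := by
    filter_upwards [ae_mT_norm_eq_one] with ζ hζ
    have hz : (r : ℂ) * ζ ∈ Metric.ball (0 : ℂ) 1 := by
      rw [mem_ball_zero_iff, norm_mul, hrn, hζ, mul_one]
      exact hr1
    have h1 := hf _ hz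
    have h2 : HasSum (fun n => (starRingEnd ℂ) (b n * ((r : ℂ) * ζ) ^ n))
        ((starRingEnd ℂ) (g ((r : ℂ) * ζ))) :=
      (hg _ hz).map (starRingEnd ℂ) Complex.continuous_conj
    have hn1 := h1.summable.norm
    have hn2 := h2.summable.norm
    have hn := summable_mul_of_summable_norm hn1 hn2
    have h3 := h1.mul h2 hn
    rw [← h3.tsum_eq]
    refine tsum_congr fun p => ?_
    simp only [F, hc, map_mul, map_pow, mul_pow]
    ring
  rw [integral_congr_ae hpt] at hsum
  have hval : ∀ p : ℕ × ℕ, ∫ ζ, F p ζ ∂mT = if p.1 = p.2 then c p else 0 := by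
    intro p
    simp only [F]
    rw [integral_const_mul, integral_mT_monomial]
    simp
  simp only [hval] at hsum
  -- The integrated series is supported on the diagonal `n ↦ (n, n)`.
  have hinj : Function.Injective fun n : ℕ => (n, n) := fun x y h => (Prod.mk.inj h).1
  have hd := (hinj.hasSum_iff (f := fun p : ℕ × ℕ => if p.1 = p.2 then c p else 0) ?_).2 hsum
  · rw [← hd.tsum_eq]
    refine tsum_congr fun n => ?_
    simp only [Function.comp_apply, if_true, hc, map_mul, map_pow, Complex.conj_ofReal]
    ring
  · rintro ⟨x, y⟩ hxy
    refine if_neg fun h => hxy ⟨x, ?_⟩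
    simp only at h
    rw [h]

/-- Cauchy duality: for `f ∈ X_α` and `g ∈ X_{-α}` with Taylor coefficients `a`, `b`,
the series `∑ a n * conj (b n)` converges absolutely and
`lim_{r→1⁻} ∫_𝕋 f(rζ) conj(g(rζ)) dm(ζ) = ∑ a n * conj (b n)`. -/
theorem stmt2 (α : ℝ) (f g : ℂ → ℂ) (a b : ℕ → ℂ)
    (hf : ∀ z ∈ Metric.ball (0 : ℂ) 1, HasSum (fun n : ℕ => a n * z ^ n) (f z))
    (hg : ∀ z ∈ Metric.ball (0 : ℂ) 1, HasSum (fun n : ℕ => b n * z ^ n) (g z))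
    (ha : Summable fun n : ℕ => ((n : ℝ) + 1) ^ α * ‖a n‖ ^ 2)
    (hb : Summable fun n : ℕ => ((n : ℝ) + 1) ^ (-α) * ‖b n‖ ^ 2) :
    (Summable fun n : ℕ => ‖a n * (starRingEnd ℂ) (b n)‖) ∧
    Filter.Tendsto
      (fun r : ℝ => ∫ ζ : ℂ, f ((r : ℂ) * ζ) * (starRingEnd ℂ) (g ((r : ℂ) * ζ)) ∂mT)
      (nhdsWithin (1 : ℝ) (Set.Iio 1))
      (nhds (∑' n : ℕ, a n * (starRingEnd ℂ) (b n))) := by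
  have hs : Summable fun n : ℕ => ‖a n * (starRingEnd ℂ) (b n)‖ := by
    refine Summable.of_nonneg_of_le (fun _ => norm_nonneg _) (fun n => ?_)
      ((ha.add hb).mul_left (1 / 2))
    have hw : (0 : ℝ) < (n : ℝ) + 1 := by positivity
    have hp : (0 : ℝ) < ((n : ℝ) + 1) ^ α := Real.rpow_pos_of_pos hw α
    rw [Real.rpow_neg hw.le, norm_mul, RCLike.norm_conj]
    generalize ((n : ℝ) + 1) ^ α = w at hp
    -- The gap in AM-GM is `w⁻¹ (w ‖a n‖ - ‖b n‖)² / 2`.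
    have h : 0 ≤ w⁻¹ * (w * ‖a n‖ - ‖b n‖) ^ 2 := by positivity
    have e : w⁻¹ * (w * ‖a n‖ - ‖b n‖) ^ 2
        = w * ‖a n‖ ^ 2 + w⁻¹ * ‖b n‖ ^ 2 - 2 * (‖a n‖ * ‖b n‖) := by
      field_simp
      ring
    linarith
  refine ⟨hs, ?_⟩
  have hnear : ∀ᶠ r : ℝ in nhdsWithin (1 : ℝ) (Set.Iio 1), 0 < r ∧ r < 1 :=
    Ioo_mem_nhdsLT one_pos
  have hlim : Filter.Tendsto
      (fun r : ℝ => ∑' n : ℕ, a n * (starRingEnd ℂ) (b n) * (r : ℂ) ^ (2 * n))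
      (nhdsWithin (1 : ℝ) (Set.Iio 1)) (nhds (∑' n : ℕ, a n * (starRingEnd ℂ) (b n))) := by
    refine tendsto_tsum_of_dominated_convergence hs (fun n => ?_) ?_
    · have hcont : Continuous fun r : ℝ => a n * (starRingEnd ℂ) (b n) * (r : ℂ) ^ (2 * n) := by
        fun_prop
      have := (hcont.tendsto 1).mono_left (nhdsWithin_le_nhds (s := Set.Iio (1 : ℝ)))
      simpa using this
    · filter_upwards [hnear] with r hr n
      rw [norm_mul _ ((r : ℂ) ^ (2 * n))]
      refine mul_le_of_le_one_right (norm_nonneg _) ?_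
      rw [norm_pow, Complex.norm_real, Real.norm_of_nonneg hr.1.le]
      exact pow_le_one₀ hr.1.le hr.2.le
  refine hlim.congr' ?_
  filter_upwards [hnear] with r hr
  exact (integral_mT_dilation f g a b hf hg r hr.1 hr.2).symm
end

section
/- For every real number α, the conjugate-linear map which sends g ∈ X_{-α} to the linear functional L_g on X_α defined by L_g(f) = ∑_{n≥0} f_n·conj(g_n) (equivalently, L_g(f) = lim_{r→1⁻} ∫_𝕋 f(rζ)·conj(g(rζ)) dm(ζ)) is a bijection from X_{-α} onto the continuous dual space of X_α, and it is isometric: the operator norm of L_g equals ‖g‖_{-α}. In other words, under the Cauchy pairing, X_{-α} is isometrically isomorphic to the dual space of X_α. -/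
/-!
The dual of the Hilbert space `X_α` is given by the Riesz representation theorem
(`InnerProductSpace.toDual`), with respect to the weighted inner product
`⟪h, f⟫ = ∑ (n+1)^α f_n conj (h_n)` (`inner_eq_tsum`). Multiplying the coefficients of
`g ∈ X_{-α}` by `(n+1)^(-α)` gives an isometric bijection `reweight` of `X_{-α}` onto `X_α`,
because `(n+1)^α ((n+1)^(-α))² = (n+1)^(-α)`; with `h` the image of `g` the weights in the
inner product cancel and leave the Cauchy pairing. So `g ↦ L_g` is the composition of
`reweight` with the Riesz isometry.
-/

open MeasureTheory
open scoped ENNReal NNReal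

/-- The weighted counting measure on `ℕ` with weight `(n+1)^β`; the space `X_β` is
isometrically identified (via Taylor coefficients) with `L²` of this measure, i.e. with
the space of sequences `a : ℕ → ℂ` such that `∑ (n+1)^β |a n|² < ∞`, with the
corresponding norm. -/
noncomputable def wMeasure (β : ℝ) : Measure ℕ :=
  Measure.count.withDensity (fun n => ENNReal.ofReal (((n : ℝ) + 1) ^ β))

/-- The space `X_β`, realized as the weighted sequence space of Taylor coefficients. -/
noncomputable abbrev Xseq (β : ℝ) := Lp ℂ 2 (wMeasure β)

lemma weight_pos (β : ℝ) (n : ℕ) : 0 < ((n : ℝ) + 1) ^ β := by positivity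

lemma lintegral_wMeasure (β : ℝ) (F : ℕ → ℝ≥0∞) :
    ∫⁻ n, F n ∂(wMeasure β) = ∑' n : ℕ, ENNReal.ofReal (((n : ℝ) + 1) ^ β) * F n := by
  rw [wMeasure, lintegral_withDensity_eq_lintegral_mul _ (measurable_of_countable _)
    (measurable_of_countable _), lintegral_count]
  rfl

/-- Every point of `ℕ` has positive mass, so the only null set is the empty one. -/
lemma forall_of_ae_wMeasure {β : ℝ} {p : ℕ → Prop} (h : ∀ᵐ n ∂(wMeasure β), p n) (n : ℕ) :
    p n := by
  rw [wMeasure, ae_withDensity_iff (measurable_of_countable _), Measure.ae_count_iff] at h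
  exact h n (by simpa using weight_pos β n)

lemma eLpNorm_wMeasure (β : ℝ) (f : ℕ → ℂ) :
    eLpNorm f 2 (wMeasure β) =
      (∑' n : ℕ, ENNReal.ofReal (((n : ℝ) + 1) ^ β) * ‖f n‖ₑ ^ (2 : ℝ)) ^ (1 / (2 : ℝ)) := by
  rw [eLpNorm_eq_lintegral_rpow_enorm_toReal (by norm_num) (by norm_num)]
  simp only [ENNReal.toReal_ofNat]
  rw [lintegral_wMeasure]

/-- The norm of a reweighted sequence: `(n+1)^γ ((n+1)^β)² = (n+1)^β` when `β + γ = 0`. -/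
lemma eLpNorm_reweight {β γ : ℝ} (h : β + γ = 0) (f : ℕ → ℂ) :
    eLpNorm (fun n : ℕ => ((((n : ℝ) + 1) ^ β : ℝ) : ℂ) * f n) 2 (wMeasure γ) =
      eLpNorm f 2 (wMeasure β) := by
  rw [eLpNorm_wMeasure, eLpNorm_wMeasure]
  congr 2
  ext n
  have hp := weight_pos β n
  have hw : ‖((((n : ℝ) + 1) ^ β : ℝ) : ℂ)‖ₑ = ENNReal.ofReal (((n : ℝ) + 1) ^ β) := by
    rw [← ofReal_norm, Complex.norm_real, Real.norm_of_nonneg hp.le]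
  rw [enorm_mul, hw, ENNReal.mul_rpow_of_nonneg _ _ (by norm_num), ← mul_assoc,
    ENNReal.ofReal_rpow_of_nonneg hp.le (by norm_num),
    ← ENNReal.ofReal_mul (weight_pos γ n).le]
  have h1 : (0 : ℝ) < (n : ℝ) + 1 := by positivity
  rw [← Real.rpow_mul h1.le, ← Real.rpow_add h1]
  congr 4
  linarith

lemma memLp_reweight {β γ : ℝ} (h : β + γ = 0) (g : Xseq β) :
    MemLp (fun n : ℕ => ((((n : ℝ) + 1) ^ β : ℝ) : ℂ) * g n) 2 (wMeasure γ) :=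
  ⟨(measurable_of_countable _).aestronglyMeasurable, by
    rw [eLpNorm_reweight h]; exact (Lp.memLp g).2⟩

/-- The map `X_β → X_γ`, `(g_n) ↦ ((n+1)^β g_n)`, for `γ = -β`. The relation between the
exponents is a hypothesis, so that the inverse is again of this form. -/
noncomputable def reweight {β γ : ℝ} (h : β + γ = 0) (g : Xseq β) : Xseq γ :=
  (memLp_reweight h g).toLp _

lemma reweight_apply {β γ : ℝ} (h : β + γ = 0) (g : Xseq β) (n : ℕ) :
    reweight h g n = ((((n : ℝ) + 1) ^ β : ℝ) : ℂ) * g n :=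
  forall_of_ae_wMeasure (memLp_reweight h g).coeFn_toLp n

lemma Xseq_ext {β : ℝ} {f g : Xseq β} (h : ∀ n, f n = g n) : f = g :=
  Lp.ext (Filter.Eventually.of_forall h)

lemma norm_reweight {β γ : ℝ} (h : β + γ = 0) (g : Xseq β) : ‖reweight h g‖ = ‖g‖ := by
  rw [reweight, Lp.norm_toLp, eLpNorm_reweight h, Lp.norm_def]

lemma weight_mul_weight {β γ : ℝ} (h : β + γ = 0) (n : ℕ) :
    ((((n : ℝ) + 1) ^ β : ℝ) : ℂ) * ((((n : ℝ) + 1) ^ γ : ℝ) : ℂ) = 1 := by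
  have h1 : (0 : ℝ) < (n : ℝ) + 1 := by positivity
  rw [← Complex.ofReal_mul, ← Real.rpow_add h1, h, Real.rpow_zero, Complex.ofReal_one]

lemma reweight_reweight {β γ : ℝ} (h : β + γ = 0) (h' : γ + β = 0) (g : Xseq β) :
    reweight h' (reweight h g) = g :=
  Xseq_ext fun n => by
    rw [reweight_apply, reweight_apply, ← mul_assoc, weight_mul_weight h', one_mul]

lemma reweight_add {β γ : ℝ} (h : β + γ = 0) (f g : Xseq β) :
    reweight h (f + g) = reweight h f + reweight h g :=
  Xseq_ext fun n => by
    rw [reweight_apply, forall_of_ae_wMeasure (Lp.coeFn_add f g) n,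
      forall_of_ae_wMeasure (Lp.coeFn_add (reweight h f) (reweight h g)) n]
    simp only [Pi.add_apply, reweight_apply, mul_add]

lemma reweight_smul {β γ : ℝ} (h : β + γ = 0) (c : ℂ) (g : Xseq β) :
    reweight h (c • g) = c • reweight h g :=
  Xseq_ext fun n => by
    rw [reweight_apply, forall_of_ae_wMeasure (Lp.coeFn_smul c g) n,
      forall_of_ae_wMeasure (Lp.coeFn_smul c (reweight h g)) n]
    simp only [Pi.smul_apply, reweight_apply, smul_eq_mul, mul_left_comm]

lemma wMeasure_real_singleton (β : ℝ) (n : ℕ) :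
    (wMeasure β).real {n} = ((n : ℝ) + 1) ^ β := by
  rw [measureReal_def, wMeasure, withDensity_apply _ (measurableSet_singleton n),
    lintegral_singleton, Measure.count_singleton, mul_one,
    ENNReal.toReal_ofReal (weight_pos β n).le]

lemma inner_eq_tsum {β : ℝ} (h f : Xseq β) :
    inner ℂ h f =
      ∑' n : ℕ, ((((n : ℝ) + 1) ^ β : ℝ) : ℂ) * (f n * (starRingEnd ℂ) (h n)) := by
  rw [L2.inner_def, integral_countable (L2.integrable_inner h f)]
  refine tsum_congr fun n => ?_
  rw [wMeasure_real_singleton, Complex.real_smul]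
  rfl

/-- The weight of `X_α` cancels the factor introduced by `reweight`. -/
lemma inner_reweight {α β : ℝ} (h : β + α = 0) (g : Xseq β) (f : Xseq α) :
    inner ℂ (reweight h g) f = ∑' n : ℕ, f n * (starRingEnd ℂ) (g n) := by
  rw [inner_eq_tsum]
  refine tsum_congr fun n => ?_
  rw [reweight_apply, map_mul, Complex.conj_ofReal]
  linear_combination (f n * (starRingEnd ℂ) (g n)) * weight_mul_weight h n

/-- Under the Cauchy pairing `L_g(f) = ∑ f_n conj (g_n)`, the conjugate-linear map
`g ↦ L_g` is an isometric bijection from `X_{-α}` onto the continuous dual of `X_α`. -/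
theorem stmt3 (α : ℝ) :
    ∃ Φ : Xseq (-α) → (Xseq α →L[ℂ] ℂ),
      (∀ (g : Xseq (-α)) (f : Xseq α),
        Φ g f = ∑' n : ℕ, (f : ℕ → ℂ) n * (starRingEnd ℂ) ((g : ℕ → ℂ) n)) ∧
      (∀ g₁ g₂ : Xseq (-α), Φ (g₁ + g₂) = Φ g₁ + Φ g₂) ∧
      (∀ (c : ℂ) (g : Xseq (-α)), Φ (c • g) = (starRingEnd ℂ) c • Φ g) ∧
      Function.Bijective Φ ∧
      (∀ g : Xseq (-α), ‖Φ g‖ = ‖g‖) := by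
  have h : -α + α = 0 := neg_add_cancel α
  have h' : α + -α = 0 := add_neg_cancel α
  refine ⟨fun g => InnerProductSpace.toDual ℂ (Xseq α) (reweight h g), fun g f => ?_,
    fun g₁ g₂ => ?_, fun c g => ?_, ?_, fun g => ?_⟩
  · rw [InnerProductSpace.toDual_apply_apply, inner_reweight]
  · beta_reduce
    rw [reweight_add, map_add]
  · beta_reduce
    rw [reweight_smul, map_smulₛₗ]
  · exact (InnerProductSpace.toDual ℂ (Xseq α)).bijective.comp
      (Function.bijective_iff_has_inverse.2
        ⟨reweight h', reweight_reweight h h', reweight_reweight h' h⟩)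
  · rw [LinearIsometryEquiv.norm_map, norm_reweight]
end

section
/- Let S be a closed linear subspace of L²(𝕋, m) which is invariant under the operator M_z* of multiplication by conj(z) (the adjoint of the shift M_z on L²(𝕋)), i.e. M_z* S ⊆ S. Then either S = L²(F) = { f ∈ L²(𝕋) : f = 0 m-almost everywhere on 𝕋∖F } for some measurable set F ⊆ 𝕋, or S = U·conj(H²) = { U·conj(h) : h ∈ H² } for some unimodular function U ∈ L^∞(𝕋) (|U| = 1 m-a.e.). -/
/-!
Either `S` is invariant under `M_z` as well, or it contains a unit vector `u ⟂ M_z* S`.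

In the first case, for `f ∈ S` and `w ⟂ S` the integrable function `f · conj w` has vanishing
Fourier coefficients, so it is zero (`ae_eq_zero_of_integral_fourier`). Hence elements of `S` and
of `Sᗮ` have disjoint supports. The projection `g` of the constant `1` onto `S` then determines
`S`: an `f ∈ S` lives on `F = {g ≠ 0}` because `1 - g ∈ Sᗮ`, and an `f` living on `F` is orthogonal
to `Sᗮ`, because every element of `Sᗮ` vanishes on `F` (`eq_L2_of_reducing`).

In the second case, `u ⟂ zⁿ u` for `n < 0` makes `|u|²` constant (`unimodular_of_orthogonal`). For
`f ∈ S`, the orthogonality `u ⟂ zⁿ f`, `n < 0`, says exactly that `u · conj f ∈ H²`, that is,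
`f ∈ u · conj(H²)`. Conversely, if `w ⟂ S` then `conj u · w` has no Fourier coefficients of index
`≤ 0`, so it is orthogonal to `conj(H²)`; thus `u · conj(H²) ⊆ Sᗮᗮ = S` (`eq_mul_conj_hardy`).

To produce `u`, take `f ∈ S` with `z f ∉ S`, let `p` be the projection of `z f` onto `S`, and
normalize `M_z* (z f - p) = f - M_z* p`.
-/

open MeasureTheory AddCircle
open scoped ENNReal NNReal

noncomputable section

instance : Fact ((0 : ℝ) < 2 * Real.pi) := ⟨by positivity⟩

/-- The unit circle `𝕋`, realized as `ℝ / 2πℤ`, with its normalized Haar (arclength)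
measure `m`, of total mass `1`. -/
def m2pi : Measure (AddCircle (2 * Real.pi)) := haarAddCircle

/-- `L²(𝕋) = L²(𝕋, m)`. -/
abbrev L2T := Lp ℂ 2 m2pi

/-! ### Uniqueness of Fourier coefficients in `L¹(𝕋)` -/

instance : IsProbabilityMeasure m2pi := by unfold m2pi; infer_instance

/-- An integrable function on the circle all of whose Fourier coefficients vanish is zero almost
everywhere. It is not assumed square integrable, since below it is a product of two `L²`
functions. By Stone–Weierstrass it annihilates all continuous functions, hence, approximating
indicators from above, it has zero integral over every closed set. -/
lemma ae_eq_zero_of_integral_fourier {f : AddCircle (2 * Real.pi) → ℂ} (hf : Integrable f m2pi)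
    (h : ∀ n : ℤ, ∫ x, fourier n x * f x ∂m2pi = 0) : f =ᵐ[m2pi] 0 := by
  have hb : ∀ φ : C(AddCircle (2 * Real.pi), ℂ), Integrable (fun x => φ x * f x) m2pi :=
    fun φ => hf.bdd_mul (c := ‖φ‖) φ.continuous.aestronglyMeasurable
      (Filter.Eventually.of_forall fun x => φ.norm_coe_le_norm x)
  let L : C(AddCircle (2 * Real.pi), ℂ) →ₗ[ℂ] ℂ :=
    { toFun := fun φ => ∫ x, φ x * f x ∂m2pi
      map_add' := fun φ ψ => by
        simp only [ContinuousMap.add_apply, add_mul]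
        exact integral_add (hb φ) (hb ψ)
      map_smul' := fun c φ => by
        simp only [ContinuousMap.smul_apply, smul_eq_mul, mul_assoc, RingHom.id_apply]
        exact integral_const_mul _ _ }
  have hLb : ∀ φ, ‖L φ‖ ≤ (∫ x, ‖f x‖ ∂m2pi) * ‖φ‖ := fun φ => by
    rw [mul_comm _ ‖φ‖, ← integral_const_mul]
    refine (norm_integral_le_integral_norm _).trans
      (integral_mono (hb φ).norm (hf.norm.const_mul _) fun x => ?_)
    simp only [norm_mul]
    gcongr
    exact φ.norm_coe_le_norm x
  let L' := L.mkContinuous _ hLb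
  have hL' : ∀ φ, L' φ = 0 := by
    have hle : (Submodule.span ℂ (Set.range <| @fourier (2 * Real.pi))).topologicalClosure
        ≤ L'.ker := by
      refine Submodule.topologicalClosure_minimal _ (Submodule.span_le.2 ?_) L'.isClosed_ker
      rintro _ ⟨n, rfl⟩
      exact h n
    rw [span_fourier_closure_eq_top] at hle
    exact fun φ => hle trivial
  refine ae_eq_zero_of_forall_setIntegral_isClosed_eq_zero hf fun s hs => ?_
  have hδ : ∀ n : ℕ, (0 : ℝ) < 1 / ((n : ℝ) + 1) := fun n => Nat.one_div_pos_of_nat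
  let T : ℕ → AddCircle (2 * Real.pi) → ℂ :=
    fun n x => (((thickenedIndicator (hδ n) s x : ℝ≥0) : ℝ) : ℂ)
  have hTc : ∀ n, Continuous (T n) := fun n =>
    Complex.continuous_ofReal.comp (NNReal.continuous_coe.comp (thickenedIndicator (hδ n) s).continuous)
  have hT0 : ∀ n, ∫ x, T n x * f x ∂m2pi = 0 := fun n => hL' ⟨T n, hTc n⟩
  have hlim : Filter.Tendsto (fun n => ∫ x, T n x * f x ∂m2pi) Filter.atTop
      (nhds (∫ x, s.indicator f x ∂m2pi)) := by
    refine tendsto_integral_of_dominated_convergence (fun x => ‖f x‖)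
      (fun n => (hTc n).aestronglyMeasurable.mul hf.1) hf.norm (fun n => ?_) ?_
    · refine Filter.Eventually.of_forall fun x => ?_
      rw [norm_mul]
      refine mul_le_of_le_one_left (norm_nonneg _) ?_
      simp only [T, Complex.norm_real, NNReal.norm_eq]
      exact_mod_cast thickenedIndicator_le_one (hδ n) s x
    · refine Filter.Eventually.of_forall fun x => ?_
      have h1 := tendsto_pi_nhds.1 (thickenedIndicator_tendsto_indicator_closure hδ
        tendsto_one_div_add_atTop_nhds_zero_nat s) x
      rw [hs.closure_eq] at h1
      have h2 := ((Complex.continuous_ofReal.comp NNReal.continuous_coe).tendsto _).comp h1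
      have h3 := h2.mul_const (f x)
      have h4 : (Complex.ofReal ∘ NNReal.toReal) (s.indicator (fun _ => (1 : ℝ≥0)) x) * f x
          = s.indicator f x := by
        by_cases hx : x ∈ s <;> simp [hx]
      rwa [h4] at h3
  simp only [hT0] at hlim
  rw [← integral_indicator hs.measurableSet]
  exact (tendsto_nhds_unique tendsto_const_nhds hlim).symm

/-! ### Powers of the shift -/

lemma exists_mul (φ : AddCircle (2 * Real.pi) → ℂ) (hφ : AEStronglyMeasurable φ m2pi)
    (h1 : ∀ᵐ x ∂m2pi, ‖φ x‖ = 1) (f : AddCircle (2 * Real.pi) → ℂ) (hf : MemLp f 2 m2pi) :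
    ∃ g : L2T, ⇑g =ᵐ[m2pi] fun x => φ x * f x := by
  have : MemLp (fun x => φ x * f x) 2 m2pi := by
    refine hf.congr_norm (hφ.mul hf.1) ?_
    filter_upwards [h1] with x hx
    simp [hx]
  exact ⟨this.toLp, this.coeFn_toLp⟩

lemma norm_fourier_apply (n : ℤ) (x : AddCircle (2 * Real.pi)) : ‖fourier n x‖ = 1 := by
  rw [fourier_apply]; exact Circle.norm_coe _

lemma exists_fourier_mul (n : ℤ) (f : L2T) :
    ∃ g : L2T, ⇑g =ᵐ[m2pi] fun x => fourier n x * f x :=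
  exists_mul _ (fourier n).continuous.aestronglyMeasurable
    (Filter.Eventually.of_forall (norm_fourier_apply n)) f (Lp.memLp f)

/-- `M_z` to the power `n`, for `n : ℤ`, on `L²(𝕋)`, as a bare function: linearity and isometry are
proved below only as far as needed. It is the unique class satisfying `shiftPow_ae`. -/
def shiftPow (n : ℤ) (f : L2T) : L2T := (exists_fourier_mul n f).choose

lemma shiftPow_ae (n : ℤ) (f : L2T) : ⇑(shiftPow n f) =ᵐ[m2pi] fun x => fourier n x * f x :=
  (exists_fourier_mul n f).choose_spec

lemma shiftPow_shiftPow (m n : ℤ) (f : L2T) : shiftPow m (shiftPow n f) = shiftPow (m + n) f := by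
  refine Lp.ext ?_
  filter_upwards [shiftPow_ae m (shiftPow n f), shiftPow_ae n f, shiftPow_ae (m + n) f]
    with x h1 h2 h3
  rw [h1, h2, h3, fourier_add, mul_assoc]

lemma shiftPow_zero (f : L2T) : shiftPow 0 f = f := by
  refine Lp.ext ?_
  filter_upwards [shiftPow_ae 0 f] with x h1
  simp [h1]

lemma shiftPow_sub (n : ℤ) (f g : L2T) : shiftPow n (f - g) = shiftPow n f - shiftPow n g := by
  refine Lp.ext ?_
  filter_upwards [shiftPow_ae n (f - g), shiftPow_ae n f, shiftPow_ae n g, Lp.coeFn_sub f g,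
    Lp.coeFn_sub (shiftPow n f) (shiftPow n g)] with x h1 h2 h3 h4 h5
  rw [h1, h5, Pi.sub_apply, h2, h3, h4, Pi.sub_apply, mul_sub]

lemma inner_shiftPow (n : ℤ) (w f : L2T) :
    inner ℂ w (shiftPow n f) = ∫ x, fourier n x * (f x * (starRingEnd ℂ) (w x)) ∂m2pi := by
  rw [L2.inner_def]
  refine integral_congr_ae ?_
  filter_upwards [shiftPow_ae n f] with x h
  rw [RCLike.inner_apply, h, mul_assoc]

lemma inner_shiftPow_shiftPow (n : ℤ) (w f : L2T) :
    inner ℂ (shiftPow n w) (shiftPow n f) = inner ℂ w f := by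
  rw [inner_shiftPow, L2.inner_def]
  refine integral_congr_ae ?_
  filter_upwards [shiftPow_ae n w] with x h
  have h1 : fourier n x * (starRingEnd ℂ) (fourier n x) = 1 := by
    rw [RCLike.mul_conj, norm_fourier_apply]; simp
  rw [RCLike.inner_apply, h, map_mul]
  linear_combination (f x * (starRingEnd ℂ) (w x)) * h1

lemma integrable_mul_conj (w f : L2T) :
    Integrable (fun x => f x * (starRingEnd ℂ) (w x)) m2pi := by
  simpa only [RCLike.inner_apply] using L2.integrable_inner (𝕜 := ℂ) w f

/-! ### Consequences of orthogonality of shifts -/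

/-- If `w` is orthogonal to every `zⁿ f`, `n : ℤ`, then `f` and `w` have essentially disjoint
supports. -/
lemma mul_conj_ae_zero {w f : L2T} (h : ∀ n : ℤ, inner ℂ w (shiftPow n f) = 0) :
    (fun x => f x * (starRingEnd ℂ) (w x)) =ᵐ[m2pi] 0 :=
  ae_eq_zero_of_integral_fourier (integrable_mul_conj w f) fun n => by rw [← inner_shiftPow, h]

/-- If a unit vector `u` is orthogonal to every `zⁿ u` with `n < 0`, then `|u| = 1` almost
everywhere, because `|u|²` has the Fourier coefficients of the constant `1`. -/
lemma unimodular_of_orthogonal {u : L2T} (hu : ‖u‖ = 1)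
    (h : ∀ n : ℤ, n < 0 → inner ℂ u (shiftPow n u) = 0) : ∀ᵐ x ∂m2pi, ‖u x‖ = 1 := by
  have h' : ∀ n : ℤ, n ≠ 0 → inner ℂ u (shiftPow n u) = 0 := by
    intro n hn
    rcases lt_or_gt_of_ne hn with hn | hn
    · exact h n hn
    · have := h (-n) (by omega)
      rw [← inner_shiftPow_shiftPow n, shiftPow_shiftPow, add_neg_cancel, shiftPow_zero] at this
      rw [← inner_conj_symm, this, map_zero]
  have h0 : inner ℂ u (shiftPow 0 u) = 1 := by
    rw [shiftPow_zero, inner_self_eq_norm_sq_to_K, hu]; simp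
  have hi : ∀ n : ℤ, Integrable (fun x => fourier n x * (u x * (starRingEnd ℂ) (u x))) m2pi :=
    fun n => (integrable_mul_conj u u).bdd_mul (c := 1)
      (fourier n).continuous.aestronglyMeasurable
      (Filter.Eventually.of_forall fun x => (norm_fourier_apply n x).le)
  have hc : ∀ n : ℤ, ∫ x : AddCircle (2 * Real.pi), fourier n x ∂m2pi = if n = 0 then 1 else 0 := by
    intro n
    have := fourierCoeff_fourier (T := 2 * Real.pi) n
    have h2 := congrFun this 0
    simp only [fourierCoeff, neg_zero, fourier_zero, one_smul] at h2
    change ∫ x : AddCircle (2 * Real.pi), fourier n x ∂haarAddCircle = _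
    rw [h2, Pi.single_apply]
    simp [eq_comm]
  have := ae_eq_zero_of_integral_fourier (f := fun x => u x * (starRingEnd ℂ) (u x) - 1)
    ((integrable_mul_conj u u).sub (integrable_const _)) fun n => by
      simp only [mul_sub, mul_one]
      rw [integral_sub (hi n) ((fourier n).continuous.integrable_of_hasCompactSupport
        (HasCompactSupport.of_compactSpace _)), ← inner_shiftPow, hc]
      by_cases hn : n = 0
      · subst hn; simp [h0]
      · simp [h' n hn, hn]
  filter_upwards [this] with x hx
  rw [Pi.zero_apply, Complex.mul_conj', sub_eq_zero] at hx
  have h2 : ‖u x‖ ^ 2 = 1 := by exact_mod_cast hx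
  exact (pow_eq_one_iff_of_nonneg (norm_nonneg _) two_ne_zero).1 h2

/-- By Parseval, `L²` functions with disjoint Fourier supports are orthogonal. -/
lemma inner_eq_zero_of_fourierCoeff (f g : L2T)
    (h : ∀ n : ℤ, fourierCoeff (⇑f) n = 0 ∨ fourierCoeff (⇑g) n = 0) : inner ℂ f g = 0 := by
  have key : ∀ f g : Lp ℂ 2 (haarAddCircle (T := 2 * Real.pi)),
      (∀ n : ℤ, fourierCoeff (⇑f) n = 0 ∨ fourierCoeff (⇑g) n = 0) → inner ℂ f g = 0 := by
    intro f g h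
    rw [← (fourierBasis (T := 2 * Real.pi)).tsum_inner_mul_inner f g]
    refine (tsum_congr fun n => ?_).trans tsum_zero
    rw [← inner_conj_symm, ← HilbertBasis.repr_apply_apply, ← HilbertBasis.repr_apply_apply,
      fourierBasis_repr, fourierBasis_repr, mul_eq_zero, map_eq_zero]
    exact h n
  exact key f g h

/-! ### The reducing case -/

/-- A closed subspace reducing for `M_z` is `L²(F)`; here `F` is the support of the orthogonal
projection of the constant `1` onto the subspace. -/
lemma eq_L2_of_reducing (S : Submodule ℂ L2T) (hS : IsClosed (S : Set L2T))
    (h : ∀ f ∈ S, ∀ n : ℤ, shiftPow n f ∈ S) :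
    ∃ F : Set (AddCircle (2 * Real.pi)), MeasurableSet F ∧
      (S : Set L2T) = {f : L2T | ∀ᵐ x ∂m2pi, x ∉ F → f x = 0} := by
  have : CompleteSpace S := hS.completeSpace_coe
  have key : ∀ f ∈ S, ∀ w ∈ Sᗮ, (fun x => f x * (starRingEnd ℂ) (w x)) =ᵐ[m2pi] 0 :=
    fun f hf w hw => mul_conj_ae_zero fun n =>
      Submodule.inner_left_of_mem_orthogonal (h f hf n) hw
  have h1 : MemLp (fun _ : AddCircle (2 * Real.pi) => (1 : ℂ)) 2 m2pi := memLp_const _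
  let e : L2T := h1.toLp
  let g : L2T := S.starProjection e
  have hg : g ∈ S := S.starProjection_apply_mem e
  have hw : e - g ∈ Sᗮ := S.sub_starProjection_mem_orthogonal e
  refine ⟨{x | g x ≠ 0}, (Lp.stronglyMeasurable g).measurable (measurableSet_singleton 0).compl, ?_⟩
  ext f
  constructor
  · intro hf
    filter_upwards [key f hf _ hw, Lp.coeFn_sub e g, h1.coeFn_toLp] with x hx h2 h3 hxF
    have hgx : g x = 0 := by simpa using hxF
    rw [h2, Pi.sub_apply, hgx, h3] at hx
    simpa using hx
  · intro hf
    have : f ∈ Sᗮᗮ := by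
      rw [Submodule.mem_orthogonal]
      intro w hw
      rw [L2.inner_def]
      refine integral_eq_zero_of_ae ?_
      filter_upwards [hf, key g hg w hw] with x hx h2
      rw [RCLike.inner_apply]
      by_cases hgx : g x = 0
      · simp [hx (by simpa using hgx)]
      · have h3 : (starRingEnd ℂ) (w x) = 0 := (mul_eq_zero.1 h2).resolve_left hgx
        simp [h3]
    rwa [Submodule.orthogonal_orthogonal] at this

/-! ### The non-reducing case -/

/-- A unimodular `u` in `S`, orthogonal to `zⁿ S` for every `n < 0`, generates `S` in the sense
that `S = u · conj(H²)`. -/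
lemma eq_mul_conj_hardy (S : Submodule ℂ L2T) (hS : IsClosed (S : Set L2T))
    (h : ∀ f ∈ S, ∀ n : ℤ, n ≤ 0 → shiftPow n f ∈ S) (u : L2T) (huS : u ∈ S)
    (hu : ∀ᵐ x ∂m2pi, ‖u x‖ = 1)
    (horth : ∀ f ∈ S, ∀ n : ℤ, n < 0 → inner ℂ u (shiftPow n f) = 0) :
    (S : Set L2T) = {f : L2T | ∃ h : L2T,
        (∀ n : ℤ, n < 0 → fourierCoeff (⇑h) n = 0) ∧
        ⇑f =ᵐ[m2pi] fun x => u x * (starRingEnd ℂ) (h x)} := by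
  have : CompleteSpace S := hS.completeSpace_coe
  have hu' : ∀ᵐ x ∂m2pi, u x * (starRingEnd ℂ) (u x) = 1 := by
    filter_upwards [hu] with x hx
    rw [RCLike.mul_conj, hx]; simp
  ext f
  constructor
  · intro hf
    obtain ⟨k, hk⟩ := exists_mul u (Lp.aestronglyMeasurable u) hu
      (fun x => (starRingEnd ℂ) (f x)) (Lp.memLp f).star
    refine ⟨k, fun n hn => ?_, ?_⟩
    · have h2 := horth f hf n hn
      rw [← inner_conj_symm, map_eq_zero, ← inner_shiftPow_shiftPow (-n), shiftPow_shiftPow,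
        neg_add_cancel, shiftPow_zero, inner_shiftPow] at h2
      rw [← h2, fourierCoeff]
      refine integral_congr_ae ?_
      filter_upwards [hk] with x hx
      rw [hx, smul_eq_mul]
    · filter_upwards [hk, hu'] with x hx h2
      rw [hx, map_mul, Complex.conj_conj, ← mul_assoc, h2, one_mul]
  · rintro ⟨k, hk, hf⟩
    have : f ∈ Sᗮᗮ := by
      rw [Submodule.mem_orthogonal']
      intro w hw
      -- `⟪f, w⟫ = ⟪conj k, conj u · w⟫`, and the Fourier supports of these two functions
      -- are `n ≤ 0` and `n > 0`.
      obtain ⟨v, hv⟩ := exists_mul (fun x => (starRingEnd ℂ) (u x))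
        (Lp.memLp u).star.1 (by simpa using hu) w (Lp.memLp w)
      have hkc : MemLp (fun x => (starRingEnd ℂ) (k x)) 2 m2pi := (Lp.memLp k).star
      have e1 : inner ℂ f w = inner ℂ (hkc.toLp : L2T) v := by
        rw [L2.inner_def, L2.inner_def]
        refine integral_congr_ae ?_
        filter_upwards [hf, hv, hkc.coeFn_toLp] with x h1 h2 h3
        rw [RCLike.inner_apply, RCLike.inner_apply, h1, h2, h3, map_mul]
        ring
      have e2 : ∀ n : ℤ, n ≤ 0 → fourierCoeff (⇑v) n = 0 := by
        intro n hn
        have h2 : inner ℂ (shiftPow n u) w = 0 :=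
          Submodule.inner_right_of_mem_orthogonal (h u huS n hn) hw
        rw [← inner_shiftPow_shiftPow (-n), shiftPow_shiftPow, neg_add_cancel, shiftPow_zero,
          inner_shiftPow] at h2
        rw [← h2, fourierCoeff]
        refine integral_congr_ae ?_
        filter_upwards [hv] with x hx
        rw [hx, smul_eq_mul]
        ring
      have e3 : ∀ n : ℤ, 0 < n → fourierCoeff (⇑(hkc.toLp : L2T)) n = 0 := by
        intro n hn
        have h2 := hk (-n) (by omega)
        have h3 : fourierCoeff (⇑(hkc.toLp : L2T)) n
            = (starRingEnd ℂ) (fourierCoeff (⇑k) (-n)) := by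
          rw [fourierCoeff, fourierCoeff, ← integral_conj]
          refine integral_congr_ae ?_
          filter_upwards [hkc.coeFn_toLp] with x hx
          rw [hx, smul_eq_mul, smul_eq_mul, map_mul, ← fourier_neg, neg_neg]
        rw [h3, h2, map_zero]
      rw [e1]
      refine inner_eq_zero_of_fourierCoeff _ _ fun n => ?_
      rcases le_or_gt n 0 with hn | hn
      · exact Or.inr (e2 n hn)
      · exact Or.inl (e3 n hn)
    rwa [Submodule.orthogonal_orthogonal] at this

/-! ### Dichotomy -/

/-- Beurling–Wiener–Helson theorem: every closed subspace `S` of `L²(𝕋)` invariant under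
`M_z* : f(z) ↦ conj(z)·f(z)` is either `L²(F)` for a measurable `F ⊆ 𝕋`, or `U·conj(H²)`
for a unimodular function `U`.  Here `H²` is the subspace of `L²(𝕋)` of functions whose
Fourier coefficients of negative index vanish. -/
theorem stmt4 (S : Submodule ℂ L2T) (hSclosed : IsClosed (S : Set L2T))
    (hinv : ∀ f ∈ S, ∀ g : L2T,
      (⇑g =ᵐ[m2pi] fun x => (starRingEnd ℂ) (fourier 1 x) * f x) → g ∈ S) :
    (∃ F : Set (AddCircle (2 * Real.pi)), MeasurableSet F ∧
      (S : Set L2T) = {f : L2T | ∀ᵐ x ∂m2pi, x ∉ F → f x = 0}) ∨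
    (∃ U : AddCircle (2 * Real.pi) → ℂ, AEStronglyMeasurable U m2pi ∧
      (∀ᵐ x ∂m2pi, ‖U x‖ = 1) ∧
      (S : Set L2T) = {f : L2T | ∃ h : L2T,
        (∀ n : ℤ, n < 0 → fourierCoeff (⇑h) n = 0) ∧
        ⇑f =ᵐ[m2pi] fun x => U x * (starRingEnd ℂ) (h x)}) := by
  have hV : ∀ f ∈ S, shiftPow (-1) f ∈ S := fun f hf => hinv f hf _ <| by
    simpa only [fourier_neg] using shiftPow_ae (-1) f
  have hneg' : ∀ k : ℕ, ∀ f ∈ S, shiftPow (-(k : ℤ)) f ∈ S := by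
    intro k
    induction k with
    | zero => intro f hf; simpa [shiftPow_zero] using hf
    | succ k ih =>
      intro f hf
      have := hV _ (ih f hf)
      rw [shiftPow_shiftPow] at this
      convert this using 2
      push_cast; ring
  have hneg : ∀ f ∈ S, ∀ n : ℤ, n ≤ 0 → shiftPow n f ∈ S := by
    intro f hf n hn
    have := hneg' n.natAbs f hf
    rwa [show -(n.natAbs : ℤ) = n by omega] at this
  by_cases hred : ∀ f ∈ S, shiftPow 1 f ∈ S
  · left
    refine eq_L2_of_reducing S hSclosed ?_
    have hpos : ∀ k : ℕ, ∀ f ∈ S, shiftPow (k : ℤ) f ∈ S := by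
      intro k
      induction k with
      | zero => intro f hf; simpa [shiftPow_zero] using hf
      | succ k ih =>
        intro f hf
        have := hred _ (ih f hf)
        rw [shiftPow_shiftPow] at this
        convert this using 2
        push_cast; ring
    intro f hf n
    rcases le_total n 0 with hn | hn
    · exact hneg f hf n hn
    · lift n to ℕ using hn
      exact hpos n f hf
  · right
    push Not at hred
    obtain ⟨f, hf, hzf⟩ := hred
    have : CompleteSpace S := hSclosed.completeSpace_coe
    let p : L2T := S.starProjection (shiftPow 1 f)
    have hp : p ∈ S := S.starProjection_apply_mem _
    have hw : shiftPow 1 f - p ∈ Sᗮ := S.sub_starProjection_mem_orthogonal _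
    -- `v` is orthogonal to `M_z* S` since `M_z` is unitary, and lies in `S` since `v = f - M_z* p`.
    let v : L2T := shiftPow (-1) (shiftPow 1 f - p)
    have hv0 : v ≠ 0 := by
      intro hv
      have h1 : inner ℂ v v = 0 := by rw [hv, inner_zero_left]
      rw [inner_shiftPow_shiftPow, inner_self_eq_zero, sub_eq_zero] at h1
      exact hzf (h1 ▸ hp)
    have hvS : v ∈ S := by
      have : v = f - shiftPow (-1) p := by
        simp only [v, shiftPow_sub, shiftPow_shiftPow]
        simp [shiftPow_zero]
      rw [this]
      exact S.sub_mem hf (hV p hp)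
    have hvo : ∀ g ∈ S, inner ℂ v (shiftPow (-1) g) = 0 := fun g hg => by
      rw [inner_shiftPow_shiftPow]
      exact Submodule.inner_left_of_mem_orthogonal hg hw
    let u : L2T := ((‖v‖⁻¹ : ℝ) : ℂ) • v
    have huS : u ∈ S := S.smul_mem _ hvS
    have hun : ‖u‖ = 1 := by
      simp only [u, norm_smul, Complex.norm_real, norm_inv, norm_norm]
      exact inv_mul_cancel₀ (norm_ne_zero_iff.2 hv0)
    have huo : ∀ g ∈ S, ∀ n : ℤ, n < 0 → inner ℂ u (shiftPow n g) = 0 := by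
      intro g hg n hn
      have := hvo _ (hneg g hg (n + 1) (by omega))
      rw [shiftPow_shiftPow, show -1 + (n + 1) = n by ring] at this
      rw [inner_smul_left, this, mul_zero]
    have hu1 := unimodular_of_orthogonal hun (huo u huS)
    exact ⟨u, Lp.aestronglyMeasurable u, hu1,
      eq_mul_conj_hardy S hSclosed hneg u huS hu1 huo⟩

end
end

section
/- Let E ⊆ 𝕋 be a measurable set with m(E) > 0, and let φ ∈ L²(𝕋) be a function such that φ = 0 m-a.e. on 𝕋∖E, φ ≠ 0 m-a.e. on E, and ∫_E log|φ| dm = -∞ (φ is not log-integrable on E). Then the smallest closed subspace of L²(𝕋) containing φ and invariant under the operator M_z* of multiplication by conj(z) equals L²(E) = { f ∈ L²(𝕋) : f = 0 m-a.e. on 𝕋∖E }. -/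
/-!
Let `S` be a closed invariant subspace containing `φ`, and `ψ ⟂ S`. Orthogonality to
`conj(z)ⁿ φ`, `n ≥ 0`, says that `G = conj(φ) ψ ∈ L¹` satisfies `∫ zⁿ G dm = 0` for all `n ≥ 0`.
The claim is that all Fourier coefficients of `G` vanish, so that `G = 0` and hence `ψ = 0` on `E`
(`product_zero`); then `ψ` is orthogonal to `L²(E)`, and `L²(E) ⊆ Sᗮᗮ = S`.

The coefficients are treated one at a time. Replacing `G` by `zᵏ G`, it is enough to prove that
`∫ zⁿ G dm = 0` for all `n ≥ 1` implies `∫ G dm = 0` (`mean_zero`). This is a Jensen-type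
inequality, proved without boundary values of analytic functions: if `p` is a polynomial in `z`
with `p(0) = 0`, expanding the exponential gives `∫ exp(p) G dm = ∫ G dm` (`pairing_exp`). Every
real trigonometric polynomial is a constant plus the real part of such a `p`, hence
`|∫ G dm| ≤ exp(-∫ u dm) ∫ exp(u) |G| dm` for real trigonometric polynomials `u`, and by
approximation for all bounded measurable `u` (`bdd_bound`). The choice
`u = min(n, max(0, -log |φ|))` gives `exp(u) |G| ≤ (1 + |φ|) |ψ|`, which is integrable with a bound
independent of `n`. Since `∫ u dm → ∞` as `n → ∞`, the mean of `G` must be zero.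
-/

open MeasureTheory AddCircle
open scoped ENNReal NNReal

noncomputable section

open Filter Topology

instance inst_s5 : IsProbabilityMeasure m2pi :=
  inferInstanceAs (IsProbabilityMeasure (haarAddCircle (T := 2 * Real.pi)))

/-- The circle `ℝ / 2πℤ`. -/
abbrev Circ := AddCircle (2 * Real.pi)

/-! ### Analytic polynomials and their exponentials -/

/-- The analytic trigonometric polynomials of mean zero: the span of `zⁿ`, `n ≥ 1`. -/
def anaPoly : Submodule ℂ C(Circ, ℂ) :=
  Submodule.span ℂ ((fun n : ℕ => (fourier ((n : ℤ) + 1) : C(Circ, ℂ))) '' Set.univ)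

lemma fourier_mem_anaPoly {n : ℤ} (hn : 1 ≤ n) : (fourier n : C(Circ, ℂ)) ∈ anaPoly := by
  refine Submodule.subset_span ⟨(n - 1).toNat, trivial, ?_⟩
  simp only
  congr 1
  omega

lemma mul_mem_anaPoly {p q : C(Circ, ℂ)} (hp : p ∈ anaPoly) (hq : q ∈ anaPoly) :
    p * q ∈ anaPoly := by
  have h : anaPoly * anaPoly ≤ anaPoly := by
    conv_lhs => unfold anaPoly
    rw [Submodule.span_mul_span, Submodule.span_le]
    rintro _ ⟨_, ⟨a, -, rfl⟩, _, ⟨b, -, rfl⟩, rfl⟩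
    have : (fourier ((a : ℤ) + 1) : C(Circ, ℂ)) * fourier ((b : ℤ) + 1)
        = fourier (((a : ℤ) + 1) + ((b : ℤ) + 1)) := by
      ext x; simp
    simp only [this, SetLike.mem_coe]
    exact fourier_mem_anaPoly (by omega)
  exact h (Submodule.mul_mem_mul hp hq)

lemma pow_mem_anaPoly {p : C(Circ, ℂ)} (hp : p ∈ anaPoly) (n : ℕ) : p ^ (n + 1) ∈ anaPoly := by
  induction n with
  | zero => simpa using hp
  | succ n ih => rw [pow_succ]; exact mul_mem_anaPoly ih hp

lemma integrable_cont_mul {G : Circ → ℂ} (hG : Integrable G m2pi) (f : C(Circ, ℂ)) :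
    Integrable (fun x => f x * G x) m2pi :=
  hG.bdd_mul (c := ‖f‖) f.continuous.aestronglyMeasurable (ae_of_all _ f.norm_coe_le_norm)

/-- The functional `f ↦ ∫ f G dm` on continuous functions. -/
def pairing {G : Circ → ℂ} (hG : Integrable G m2pi) : C(Circ, ℂ) →L[ℂ] ℂ :=
  LinearMap.mkContinuous
    { toFun := fun f => ∫ x, f x * G x ∂m2pi
      map_add' := fun f g => by
        simp only [ContinuousMap.add_apply, add_mul]
        exact integral_add (integrable_cont_mul hG f) (integrable_cont_mul hG g)
      map_smul' := fun c f => by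
        simp only [ContinuousMap.smul_apply, smul_eq_mul, mul_assoc, RingHom.id_apply]
        exact integral_const_mul _ _ }
    (∫ x, ‖G x‖ ∂m2pi) (fun f => by
      simp only [LinearMap.coe_mk, AddHom.coe_mk]
      rw [mul_comm (∫ x, ‖G x‖ ∂m2pi), ← integral_const_mul]
      refine norm_integral_le_of_norm_le (hG.norm.const_mul _) (ae_of_all _ fun x => ?_)
      rw [norm_mul]
      gcongr
      exact f.norm_coe_le_norm x)

lemma pairing_apply {G : Circ → ℂ} (hG : Integrable G m2pi) (f : C(Circ, ℂ)) :
    pairing hG f = ∫ x, f x * G x ∂m2pi := rfl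

lemma pairing_eq_zero {G : Circ → ℂ} (hG : Integrable G m2pi)
    (h0 : ∀ n : ℤ, 1 ≤ n → ∫ x, fourier n x * G x ∂m2pi = 0) {p : C(Circ, ℂ)}
    (hp : p ∈ anaPoly) : pairing hG p = 0 := by
  have : anaPoly ≤ LinearMap.ker (pairing hG).toLinearMap := by
    unfold anaPoly
    rw [Submodule.span_le]
    rintro _ ⟨n, -, rfl⟩
    exact h0 _ (by omega)
  exact this hp

/-- If the coefficients `∫ zⁿ G dm`, `n ≥ 1`, vanish and `p` is an analytic polynomial with `p(0) = 0`,
only the zeroth term of the exponential series of `p` pairs nontrivially with `G`. -/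
lemma pairing_exp {G : Circ → ℂ} (hG : Integrable G m2pi)
    (h0 : ∀ n : ℤ, 1 ≤ n → ∫ x, fourier n x * G x ∂m2pi = 0) {p : C(Circ, ℂ)}
    (hp : p ∈ anaPoly) : ∫ x, Complex.exp (p x) * G x ∂m2pi = ∫ x, G x ∂m2pi := by
  have h1 := (NormedSpace.exp_series_hasSum_exp' (𝕂 := ℂ) p).mapL (pairing hG)
  have h2 : HasSum (fun n : ℕ => pairing hG (((n.factorial : ℂ)⁻¹) • p ^ n))
      (pairing hG (((Nat.factorial 0 : ℂ)⁻¹) • p ^ 0)) := by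
    refine hasSum_single 0 fun n hn => ?_
    obtain ⟨k, rfl⟩ := Nat.exists_eq_succ_of_ne_zero hn
    rw [map_smul, pairing_eq_zero hG h0 (pow_mem_anaPoly hp k), smul_zero]
  have h3 := h1.unique h2
  have h4 : ∀ x, (NormedSpace.exp p) x = Complex.exp (p x) := fun x => by
    have := (NormedSpace.exp_series_hasSum_exp' (𝕂 := ℂ) p).mapL (ContinuousMap.evalCLM ℂ x)
    have h5 := NormedSpace.exp_series_hasSum_exp' (𝕂 := ℂ) (p x)
    rw [Complex.exp_eq_exp_ℂ]
    have h6 : (fun n : ℕ => ContinuousMap.evalCLM ℂ x ((n.factorial : ℂ)⁻¹ • p ^ n)) =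
        fun n : ℕ => (n.factorial : ℂ)⁻¹ • p x ^ n := by
      ext n
      simp [ContinuousMap.evalCLM]
    rw [h6] at this
    exact this.unique h5
  simpa [pairing_apply, h4] using h3

/-! ### The Jensen-type inequality -/

/-- A trigonometric polynomial is a constant plus an analytic polynomial of mean zero plus the
conjugate of another one. -/
lemma trigPoly_re {p : C(Circ, ℂ)} (hp : p ∈ Submodule.span ℂ (Set.range (@fourier (2 * Real.pi)))) :
    ∃ c : ℂ, ∃ q ∈ anaPoly, ∃ r ∈ anaPoly, ∀ x, p x = c + q x + (starRingEnd ℂ) (r x) := by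
  induction hp using Submodule.span_induction with
  | mem p h =>
    obtain ⟨n, rfl⟩ := h
    rcases lt_trichotomy n 0 with h | h | h
    · refine ⟨0, 0, zero_mem _, fourier (-n), fourier_mem_anaPoly (by omega), fun x => ?_⟩
      simp
    · exact ⟨1, 0, zero_mem _, 0, zero_mem _, fun x => by simp [h]⟩
    · exact ⟨0, fourier n, fourier_mem_anaPoly (by omega), 0, zero_mem _, fun x => by simp⟩
  | zero => exact ⟨0, 0, zero_mem _, 0, zero_mem _, fun x => by simp⟩
  | add p p' _ _ h h' =>
    obtain ⟨c, q, hq, r, hr, h⟩ := h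
    obtain ⟨c', q', hq', r', hr', h'⟩ := h'
    refine ⟨c + c', q + q', add_mem hq hq', r + r', add_mem hr hr', fun x => ?_⟩
    simp [h, h']; ring
  | smul a p _ h =>
    obtain ⟨c, q, hq, r, hr, h⟩ := h
    refine ⟨a * c, a • q, Submodule.smul_mem _ _ hq, (starRingEnd ℂ a) • r,
      Submodule.smul_mem _ _ hr, fun x => ?_⟩
    simp [h]; ring

lemma integral_fourier_pos {n : ℤ} (hn : 1 ≤ n) :
    ∫ x, (fourier n x : ℂ) * 1 ∂m2pi = 0 := by
  have := congrFun (fourierCoeff_fourier (T := 2 * Real.pi) n) 0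
  simp only [fourierCoeff] at this
  rw [Pi.single_eq_of_ne (by omega)] at this
  simpa [m2pi] using this

/-- The Jensen-type bound with `u = Re p`: up to the constant `∫ Re p dm`, `Re p` is the real part
of an element of `anaPoly`, to which `pairing_exp` applies. -/
lemma trigPoly_bound {G : Circ → ℂ} (hG : Integrable G m2pi)
    (h0 : ∀ n : ℤ, 1 ≤ n → ∫ x, fourier n x * G x ∂m2pi = 0) {p : C(Circ, ℂ)}
    (hp : p ∈ Submodule.span ℂ (Set.range (@fourier (2 * Real.pi)))) :
    ‖∫ x, G x ∂m2pi‖ ≤ Real.exp (-∫ x, (p x).re ∂m2pi) *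
      ∫ x, Real.exp (p x).re * ‖G x‖ ∂m2pi := by
  obtain ⟨c, q, hq, r, hr, h⟩ := trigPoly_re hp
  have hre : ∀ x, (p x).re = c.re + ((q + r) x).re := fun x => by simp [h]; ring
  have hqr := add_mem hq hr
  have hint : Integrable (fun x => (q + r) x) m2pi := by
    simpa using integrable_cont_mul (integrable_const (1 : ℂ)) (q + r)
  have hz : ∫ x, (q + r) x ∂m2pi = 0 := by
    have := pairing_eq_zero (integrable_const (1 : ℂ)) (fun n hn => integral_fourier_pos hn) hqr
    simpa [pairing_apply] using this
  have hz' : ∫ x, ((q + r) x).re ∂m2pi = 0 := by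
    have := integral_re (𝕜 := ℂ) hint
    rw [hz] at this
    simpa using this
  have hmean : ∫ x, (p x).re ∂m2pi = c.re := by
    simp only [hre]
    have hir : Integrable (fun x => ((q + r) x).re) m2pi := hint.re
    rw [integral_add (integrable_const _) hir, hz']
    simp
  rw [hmean, ← pairing_exp hG h0 hqr, ← integral_const_mul]
  refine (norm_integral_le_integral_norm _).trans (le_of_eq ?_)
  congr 1
  ext x
  rw [norm_mul, Complex.norm_exp, hre, ← mul_assoc, ← Real.exp_add]
  ring_nf

lemma integrable_exp_mul {u : Circ → ℝ} {G : Circ → ℂ} (hu : AEStronglyMeasurable u m2pi)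
    {K : ℝ} (hK : ∀ x, u x ≤ K) (hG : Integrable G m2pi) :
    Integrable (fun x => Real.exp (u x) * ‖G x‖) m2pi := by
  refine hG.norm.bdd_mul (c := Real.exp K) (Real.continuous_exp.comp_aestronglyMeasurable hu)
    (ae_of_all _ fun x => ?_)
  rw [Real.norm_eq_abs, Real.abs_exp]
  exact Real.exp_le_exp.2 (hK x)

/-- The Jensen-type bound for continuous `u`, by uniform approximation by trigonometric polynomials. -/
lemma cont_bound {G : Circ → ℂ} (hG : Integrable G m2pi)
    (h0 : ∀ n : ℤ, 1 ≤ n → ∫ x, fourier n x * G x ∂m2pi = 0) {u : Circ → ℝ}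
    (hu : Continuous u) :
    ‖∫ x, G x ∂m2pi‖ ≤ Real.exp (-∫ x, u x ∂m2pi) *
      ∫ x, Real.exp (u x) * ‖G x‖ ∂m2pi := by
  set I := ∫ x, Real.exp (u x) * ‖G x‖ ∂m2pi with hI
  have hlim : Tendsto (fun δ : ℝ => Real.exp (2 * δ) * (Real.exp (-∫ x, u x ∂m2pi) * I)) (𝓝[>] 0)
      (𝓝 (Real.exp (2 * 0) * (Real.exp (-∫ x, u x ∂m2pi) * I))) := by
    apply tendsto_nhdsWithin_of_tendsto_nhds
    exact Continuous.tendsto (by fun_prop) 0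
  have hb : ∀ δ : ℝ, 0 < δ → ‖∫ x, G x ∂m2pi‖ ≤
      Real.exp (2 * δ) * (Real.exp (-∫ x, u x ∂m2pi) * I) := by
    intro δ hδ
    let U : C(Circ, ℂ) := ⟨fun x => (u x : ℂ), by fun_prop⟩
    have hU : U ∈ (Submodule.span ℂ (Set.range (@fourier (2 * Real.pi)))).topologicalClosure := by
      rw [span_fourier_closure_eq_top]; trivial
    rw [← SetLike.mem_coe, Submodule.topologicalClosure_coe, Metric.mem_closure_iff] at hU
    obtain ⟨p, hp, hd⟩ := hU δ hδ
    have hpt : ∀ x, |u x - (p x).re| ≤ δ := fun x => by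
      have h1 := (ContinuousMap.dist_apply_le_dist (f := U) (g := p) x).trans hd.le
      rw [Complex.dist_eq] at h1
      have h2 := (Complex.abs_re_le_norm _).trans h1
      simpa [U] using h2
    have hui : Integrable u m2pi := (hu.integrable_of_hasCompactSupport
      (HasCompactSupport.of_compactSpace _))
    have hpi : Integrable (fun x => (p x).re) m2pi :=
      (Continuous.integrable_of_hasCompactSupport (by fun_prop)
      (HasCompactSupport.of_compactSpace _))
    have e1 : ∫ x, u x ∂m2pi ≤ (∫ x, (p x).re ∂m2pi) + δ := by
      have : ∫ x, u x ∂m2pi ≤ ∫ x, ((p x).re + δ) ∂m2pi :=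
        integral_mono hui (hpi.add (integrable_const δ)) fun x => by
          have := abs_le.1 (hpt x); linarith
      rwa [integral_add hpi (integrable_const δ), integral_const, probReal_univ, one_smul] at this
    obtain ⟨K, hK⟩ : ∃ K, ∀ x, u x ≤ K := by
      obtain ⟨K, hK⟩ := (isCompact_range hu).bddAbove
      exact ⟨K, fun x => hK ⟨x, rfl⟩⟩
    have e2 : ∫ x, Real.exp (p x).re * ‖G x‖ ∂m2pi ≤ Real.exp δ * I := by
      rw [hI, ← integral_const_mul]
      refine integral_mono (integrable_exp_mul (K := K + δ) hpi.1 (fun x => ?_) hG)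
        ((integrable_exp_mul (K := K) hui.1 hK hG).const_mul _) fun x => ?_
      · have := abs_le.1 (hpt x); have := hK x; linarith
      · have := abs_le.1 (hpt x)
        simp only
        rw [← mul_assoc, ← Real.exp_add]
        gcongr
        linarith
    have hI0 : 0 ≤ I := integral_nonneg fun x => by positivity
    calc _ ≤ _ := trigPoly_bound hG h0 hp
      _ ≤ Real.exp (δ + -∫ x, u x ∂m2pi) * (Real.exp δ * I) := by
        gcongr
        linarith
      _ = _ := by
        rw [Real.exp_add, show 2 * δ = δ + δ by ring, Real.exp_add]; ring
  have := ge_of_tendsto hlim (eventually_nhdsWithin_of_forall hb)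
  simpa using this

/-- A bounded measurable function is an a.e. limit of continuous functions with the same bound:
truncate an a.e. convergent subsequence of an `L¹` approximation. -/
lemma exists_cont_approx {u : Circ → ℝ} (hu : AEStronglyMeasurable u m2pi) {K : ℝ}
    (hK : ∀ x, |u x| ≤ K) :
    ∃ v : ℕ → Circ → ℝ, (∀ n, Continuous (v n)) ∧ (∀ n x, |v n x| ≤ K) ∧
      ∀ᵐ x ∂m2pi, Tendsto (fun n => v n x) atTop (𝓝 (u x)) := by
  have hK0 : 0 ≤ K := (abs_nonneg _).trans (hK 0)
  have : m2pi.WeaklyRegular := inferInstanceAs (Measure.WeaklyRegular (haarAddCircle (T := 2 * Real.pi)))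
  have hui : MemLp u 1 m2pi := MemLp.of_bound hu K (ae_of_all _ hK)
  have hex : ∀ n : ℕ, ∃ w : BoundedContinuousFunction Circ ℝ,
      eLpNorm (u - (w : Circ → ℝ)) 1 m2pi ≤ ((n : ℝ≥0∞) + 1)⁻¹ ∧ MemLp w 1 m2pi := fun n =>
    hui.exists_boundedContinuous_eLpNorm_sub_le ENNReal.one_ne_top
      (ENNReal.inv_ne_zero.2 (by finiteness))
  choose w hw hw' using hex
  have hL : Tendsto (fun n => eLpNorm ((w n : Circ → ℝ) - u) 1 m2pi) atTop (𝓝 0) := by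
    have h0 : Tendsto (fun n : ℕ => ((n : ℝ≥0∞) + 1)⁻¹) atTop (𝓝 0) := by
      have := (tendsto_add_atTop_iff_nat 1).2 ENNReal.tendsto_inv_nat_nhds_zero
      simpa using this
    refine tendsto_of_tendsto_of_tendsto_of_le_of_le tendsto_const_nhds h0 (fun _ => zero_le) ?_
    intro n
    simp only
    rw [eLpNorm_sub_comm]
    exact hw n
  have hm := tendstoInMeasure_of_tendsto_eLpNorm one_ne_zero (fun n => (hw' n).1) hu hL
  obtain ⟨ns, -, hns⟩ := hm.exists_seq_tendsto_ae
  refine ⟨fun n x => max (-K) (min K (w (ns n) x)), fun n => ?_, fun n x => ?_, ?_⟩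
  · have := (w (ns n)).continuous
    fun_prop
  · rw [abs_le]
    exact ⟨le_max_left _ _, max_le (by linarith) (min_le_left _ _)⟩
  · filter_upwards [hns] with x hx
    have h1 : Tendsto (fun n => max (-K) (min K (w (ns n) x))) atTop
        (𝓝 (max (-K) (min K (u x)))) :=
      (tendsto_const_nhds).max ((tendsto_const_nhds).min hx)
    have := abs_le.1 (hK x)
    rwa [min_eq_right this.2, max_eq_right this.1] at h1

/-- The Jensen-type bound for bounded measurable `u`. -/
lemma bdd_bound {G : Circ → ℂ} (hG : Integrable G m2pi)
    (h0 : ∀ n : ℤ, 1 ≤ n → ∫ x, fourier n x * G x ∂m2pi = 0) {u : Circ → ℝ}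
    (hu : AEStronglyMeasurable u m2pi) {K : ℝ} (hK : ∀ x, |u x| ≤ K) :
    ‖∫ x, G x ∂m2pi‖ ≤ Real.exp (-∫ x, u x ∂m2pi) *
      ∫ x, Real.exp (u x) * ‖G x‖ ∂m2pi := by
  obtain ⟨v, hvc, hvK, hv⟩ := exists_cont_approx hu hK
  have l1 : Tendsto (fun n => ∫ x, v n x ∂m2pi) atTop (𝓝 (∫ x, u x ∂m2pi)) :=
    tendsto_integral_of_dominated_convergence (fun _ => K)
      (fun n => (hvc n).aestronglyMeasurable) (integrable_const _)
      (fun n => ae_of_all _ (hvK n)) hv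
  have l2 : Tendsto (fun n => ∫ x, Real.exp (v n x) * ‖G x‖ ∂m2pi) atTop
      (𝓝 (∫ x, Real.exp (u x) * ‖G x‖ ∂m2pi)) := by
    refine tendsto_integral_of_dominated_convergence (fun x => Real.exp K * ‖G x‖)
      (fun n => (integrable_exp_mul (hvc n).aestronglyMeasurable
        (fun x => (le_abs_self _).trans (hvK n x)) hG).1) (hG.norm.const_mul _)
      (fun n => ae_of_all _ fun x => ?_) ?_
    · rw [Real.norm_of_nonneg (by positivity)]
      gcongr
      exact (le_abs_self _).trans (hvK n x)
    · filter_upwards [hv] with x hx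
      exact ((Real.continuous_exp.tendsto _).comp hx).mul_const _
  exact ge_of_tendsto' (((Real.continuous_exp.tendsto _).comp l1.neg).mul l2)
    fun n => cont_bound hG h0 (hvc n)

/-! ### Vanishing of Fourier coefficients -/

/-- Uniqueness of Fourier coefficients in `L¹`. -/
lemma ae_zero_of_fourier {G : Circ → ℂ} (hG : Integrable G m2pi)
    (h0 : ∀ n : ℤ, ∫ x, fourier n x * G x ∂m2pi = 0) : G =ᵐ[m2pi] 0 := by
  have hall : ∀ f : C(Circ, ℂ), pairing hG f = 0 := fun f => by
    have h1 : Submodule.span ℂ (Set.range (@fourier (2 * Real.pi))) ≤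
        LinearMap.ker (pairing hG).toLinearMap := by
      rw [Submodule.span_le]
      rintro _ ⟨n, rfl⟩
      exact h0 n
    have h2 := Submodule.topologicalClosure_minimal _ h1 (pairing hG).isClosed_ker
    rw [span_fourier_closure_eq_top] at h2
    exact h2 (Submodule.mem_top (x := f))
  refine hG.ae_eq_zero_of_forall_setIntegral_eq_zero fun s hs _ => ?_
  have hb : ∀ x, |s.indicator (fun _ => (1 : ℝ)) x| ≤ 1 := fun x => by
    by_cases hx : x ∈ s <;> simp [hx]
  obtain ⟨v, hvc, hvK, hv⟩ := exists_cont_approx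
    ((measurable_const.indicator hs).aestronglyMeasurable (μ := m2pi)) hb
  have hl : Tendsto (fun n => ∫ x, (v n x : ℂ) * G x ∂m2pi) atTop
      (𝓝 (∫ x, ((s.indicator (fun _ => (1 : ℝ)) x : ℝ) : ℂ) * G x ∂m2pi)) := by
    refine tendsto_integral_of_dominated_convergence (fun x => ‖G x‖)
      (fun n => (Complex.continuous_ofReal.comp (hvc n)).aestronglyMeasurable.mul hG.1) hG.norm
      (fun n => ae_of_all _ fun x => ?_) ?_
    · rw [norm_mul, Complex.norm_real]
      exact mul_le_of_le_one_left (norm_nonneg _) (hvK n x)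
    · filter_upwards [hv] with x hx
      exact ((Complex.continuous_ofReal.tendsto _).comp hx).mul_const _
  have hz : ∀ n, ∫ x, (v n x : ℂ) * G x ∂m2pi = 0 := fun n =>
    hall ⟨fun x => (v n x : ℂ), Complex.continuous_ofReal.comp (hvc n)⟩
  simp only [hz] at hl
  rw [tendsto_const_nhds_iff] at hl
  rw [← integral_indicator hs, hl]
  congr 1
  ext x
  by_cases hx : x ∈ s <;> simp [hx]

/-- The consequence of non-log-integrability: if `|G| = |φ| |ψ|` with `φ, ψ ∈ L²` and `log |φ|` not
integrable, then an integrable `G` whose coefficients `∫ zⁿ G dm`, `n ≥ 1`, vanish has mean zero. -/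
lemma mean_zero {φ ψ G : Circ → ℂ} (hφ : MemLp φ 2 m2pi) (hψ : MemLp ψ 2 m2pi)
    (hG : Integrable G m2pi) (hn : ∀ x, ‖G x‖ = ‖φ x‖ * ‖ψ x‖) {E : Set Circ}
    (hlog : (∫⁻ x in E, ENNReal.ofReal (-(Real.log ‖φ x‖)) ∂m2pi) = ⊤)
    (h0 : ∀ n : ℤ, 1 ≤ n → ∫ x, fourier n x * G x ∂m2pi = 0) : ∫ x, G x ∂m2pi = 0 := by
  by_contra hne
  have hc : 0 < ‖∫ x, G x ∂m2pi‖ := norm_pos_iff.2 hne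
  set c := ‖∫ x, G x ∂m2pi‖
  have hCi : Integrable (fun x => ‖ψ x‖ + ‖φ x‖ * ‖ψ x‖) m2pi :=
    (hψ.integrable (by norm_num)).norm.add (hφ.norm.integrable_mul hψ.norm)
  set C := ∫ x, (‖ψ x‖ + ‖φ x‖ * ‖ψ x‖) ∂m2pi
  have hlm : AEMeasurable (fun x => -Real.log ‖φ x‖) m2pi :=
    (Real.measurable_log.comp_aemeasurable hφ.1.aemeasurable.norm).neg
  let u : ℕ → Circ → ℝ := fun n x => min (n : ℝ) (max 0 (-Real.log ‖φ x‖))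
  have hu0 : ∀ n x, 0 ≤ u n x := fun n x => le_min n.cast_nonneg (le_max_left _ _)
  have hum : ∀ n, AEStronglyMeasurable (u n) m2pi := fun n =>
    (aemeasurable_const.min (aemeasurable_const.max hlm)).aestronglyMeasurable
  have hub : ∀ n x, |u n x| ≤ n := fun n x => by
    rw [abs_of_nonneg (hu0 n x)]; exact min_le_left _ _
  have hpt : ∀ n x, Real.exp (u n x) * ‖G x‖ ≤ ‖ψ x‖ + ‖φ x‖ * ‖ψ x‖ := fun n x => by
    rw [hn, ← mul_assoc]
    rcases (norm_nonneg (φ x)).eq_or_lt with h | h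
    -- At zeros of `φ`, where `Real.log 0 = 0`, the left side is zero.
    · rw [← h]; simp
    have h1 : Real.exp (u n x) * ‖φ x‖ ≤ 1 + ‖φ x‖ := by
      have h2 : u n x ≤ max 0 (-Real.log ‖φ x‖) := min_le_right _ _
      rcases max_cases 0 (-Real.log ‖φ x‖) with ⟨h3, -⟩ | ⟨h3, -⟩ <;> rw [h3] at h2
      · have := Real.exp_le_one_iff.2 h2
        nlinarith
      · have := Real.exp_le_exp.2 h2
        rw [Real.exp_neg, Real.exp_log h] at this
        have := mul_le_mul_of_nonneg_right this h.le
        rw [inv_mul_cancel₀ h.ne'] at this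
        linarith
    nlinarith [norm_nonneg (ψ x)]
  have hint : ∀ n, ∫ x, u n x ∂m2pi ≤ Real.log (C / c) := fun n => by
    have h1 := bdd_bound hG h0 (hum n) (hub n)
    have h2 : ∫ x, Real.exp (u n x) * ‖G x‖ ∂m2pi ≤ C :=
      integral_mono (integrable_exp_mul (hum n) (fun x => (le_abs_self _).trans (hub n x)) hG)
        hCi (hpt n)
    have h3 : c ≤ Real.exp (-∫ x, u n x ∂m2pi) * C := h1.trans (by gcongr)
    have h4 : 0 < C := by
      by_contra! h
      have := mul_nonpos_of_nonneg_of_nonpos (Real.exp_pos (-∫ x, u n x ∂m2pi)).le h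
      linarith
    rw [Real.le_log_iff_exp_le (by positivity), le_div_iff₀ hc]
    rw [Real.exp_neg, inv_mul_eq_div, le_div_iff₀ (Real.exp_pos _)] at h3
    linarith
  have hl : ∀ n, ∫⁻ x, ENNReal.ofReal (u n x) ∂m2pi ≤ ENNReal.ofReal (Real.log (C / c)) :=
    fun n => by
    rw [← ofReal_integral_eq_lintegral_ofReal (Integrable.of_bound (hum n) n
      (ae_of_all _ (hub n))) (ae_of_all _ (hu0 n))]
    exact ENNReal.ofReal_le_ofReal (hint n)
  have hfat : ∫⁻ x, ENNReal.ofReal (-Real.log ‖φ x‖) ∂m2pi ≤ ENNReal.ofReal (Real.log (C / c)) := by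
    have h1 : ∀ x, Tendsto (fun n => ENNReal.ofReal (u n x)) atTop
        (𝓝 (ENNReal.ofReal (-Real.log ‖φ x‖))) := fun x => by
      refine tendsto_const_nhds.congr' ?_
      obtain ⟨N, hN⟩ := exists_nat_ge (max 0 (-Real.log ‖φ x‖))
      filter_upwards [eventually_ge_atTop N] with n hnN
      have h2 : (N : ℝ) ≤ n := by exact_mod_cast hnN
      simp only [u, min_eq_right (hN.trans h2)]
      rw [ENNReal.ofReal_max]
      simp
    refine le_of_tendsto' (lintegral_tendsto_of_tendsto_of_monotone
      (fun n => (hum n).aemeasurable.ennreal_ofReal) (ae_of_all _ fun x => ?_)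
      (ae_of_all _ h1)) hl
    intro m n hmn
    apply ENNReal.ofReal_le_ofReal
    exact min_le_min_right _ (by exact_mod_cast hmn)
  have := (setLIntegral_le_lintegral E _).trans hfat
  rw [hlog] at this
  exact absurd this (by simp)

/-- If `ψ` is orthogonal to all `conj(z)ⁿ φ`, `n ≥ 0`, then `conj(φ) ψ = 0`. The remaining
coefficients vanish by induction, `mean_zero` being applied to the rotations `zᵏ conj(φ) ψ`. -/
lemma product_zero {φ ψ : Circ → ℂ} (hφ : MemLp φ 2 m2pi) (hψ : MemLp ψ 2 m2pi) {E : Set Circ}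
    (hlog : (∫⁻ x in E, ENNReal.ofReal (-(Real.log ‖φ x‖)) ∂m2pi) = ⊤)
    (h0 : ∀ n : ℕ, ∫ x, fourier n x * ((starRingEnd ℂ) (φ x) * ψ x) ∂m2pi = 0) :
    (fun x => (starRingEnd ℂ) (φ x) * ψ x) =ᵐ[m2pi] 0 := by
  have hG : Integrable (fun x => (starRingEnd ℂ) (φ x) * ψ x) m2pi :=
    hφ.star.integrable_mul hψ
  refine ae_zero_of_fourier hG fun n => ?_
  rcases le_or_gt 0 n with h | h
  · lift n to ℕ using h
    exact h0 n
  have key : ∀ N : ℕ, ∀ k : ℤ, -(N : ℤ) ≤ k →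
      ∫ x, fourier k x * ((starRingEnd ℂ) (φ x) * ψ x) ∂m2pi = 0 := by
    intro N
    induction N with
    | zero =>
      intro k hk
      lift k to ℕ using (by simpa using hk)
      exact h0 k
    | succ N ih =>
      intro k hk
      by_cases hkN : -(N : ℤ) ≤ k
      · exact ih k hkN
      refine mean_zero hφ hψ (integrable_cont_mul hG _) (fun x => ?_) hlog fun j hj => ?_
      · rw [norm_mul, fourier_apply, Circle.norm_coe]
        simp
      · rw [← ih (j + k) (by push_cast at hk; omega)]
        congr 1
        ext x
        rw [fourier_add, mul_assoc]
  exact key (-n).toNat n (by omega)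

/-! ### The space `L²(E)` and the shift -/

/-- The subspace `L²(E)`, as the kernel of the restriction of functions to the complement of
`E`. -/
def L2On (E : Set Circ) : Submodule ℂ L2T :=
  LinearMap.ker (LpToLpRestrictCLM Circ ℂ ℂ m2pi 2 Eᶜ).toLinearMap

lemma isClosed_L2On (E : Set Circ) : IsClosed (L2On E : Set L2T) :=
  (LpToLpRestrictCLM Circ ℂ ℂ m2pi 2 Eᶜ).isClosed_ker

lemma mem_L2On {E : Set Circ} (hE : MeasurableSet E) {f : L2T} :
    f ∈ L2On E ↔ ∀ᵐ x ∂m2pi, x ∉ E → f x = 0 := by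
  have h1 : f ∈ L2On E ↔ LpToLpRestrictCLM Circ ℂ ℂ m2pi 2 Eᶜ f = 0 := Iff.rfl
  have h2 := LpToLpRestrictCLM_coeFn (p := 2) (μ := m2pi) ℂ Eᶜ f
  have h3 : (∀ᵐ x ∂m2pi, x ∉ E → f x = 0) ↔ f =ᵐ[m2pi.restrict Eᶜ] 0 :=
    (ae_restrict_iff' hE.compl).symm
  rw [h1, h3, Lp.eq_zero_iff_ae_eq_zero]
  exact ⟨fun h => h2.symm.trans h, fun h => h2.trans h⟩

lemma exists_shift (f : L2T) :
    ∃ h : L2T, ⇑h =ᵐ[m2pi] fun x => (starRingEnd ℂ) (fourier 1 x) * f x := by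
  have hm : MemLp (fun x => (starRingEnd ℂ) (fourier 1 x) * f x) 2 m2pi := by
    refine (Lp.memLp f).of_le
      ((Complex.continuous_conj.comp (fourier 1).continuous).aestronglyMeasurable.mul
        (Lp.memLp f).1) (ae_of_all _ fun x => ?_)
    rw [norm_mul, RCLike.norm_conj, fourier_apply, Circle.norm_coe, one_mul]
  exact ⟨hm.toLp _, hm.coeFn_toLp⟩

/-- If `φ ∈ L²(𝕋)` vanishes a.e. off a set `E` of positive measure, is a.e. nonzero on `E`,
and `log |φ|` is not integrable on `E` (`∫_E log|φ| dm = -∞`), then the smallest closed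
`M_z*`-invariant subspace of `L²(𝕋)` containing `φ` is `L²(E)`: a function `g` vanishes
a.e. off `E` iff `g` belongs to every closed `M_z*`-invariant subspace containing `φ`. -/
theorem stmt5 (E : Set (AddCircle (2 * Real.pi))) (hE : MeasurableSet E)
    (hEpos : 0 < m2pi E)
    (φ : L2T)
    (hvanish : ∀ᵐ x ∂m2pi, x ∉ E → φ x = 0)
    (hnonzero : ∀ᵐ x ∂m2pi, x ∈ E → φ x ≠ 0)
    (hlog : (∫⁻ x in E, ENNReal.ofReal (-(Real.log ‖φ x‖)) ∂m2pi) = ⊤) :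
    ∀ g : L2T,
      ((∀ᵐ x ∂m2pi, x ∉ E → g x = 0) ↔
        (∀ S : Submodule ℂ L2T, IsClosed (S : Set L2T) →
          (∀ f ∈ S, ∀ h : L2T,
            (⇑h =ᵐ[m2pi] fun x => (starRingEnd ℂ) (fourier 1 x) * f x) → h ∈ S) →
          φ ∈ S → g ∈ S)) := by
  intro g
  constructor
  · intro hg S hSc hSinv hφS
    -- `S` contains the conjugate powers of `z` times `φ`.
    have hpow : ∀ n : ℕ, ∃ h ∈ S, ⇑h =ᵐ[m2pi] fun x => (starRingEnd ℂ) (fourier n x) * φ x := by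
      intro n
      induction n with
      | zero => exact ⟨φ, hφS, ae_of_all _ fun x => by simp⟩
      | succ n ih =>
        obtain ⟨h, hS, hh⟩ := ih
        obtain ⟨h', hh'⟩ := exists_shift h
        refine ⟨h', hSinv h hS h' hh', ?_⟩
        filter_upwards [hh, hh'] with x hx hx'
        rw [hx', hx, Nat.cast_succ, fourier_add, map_mul]
        ring
    rw [← hSc.submodule_topologicalClosure_eq, ← Submodule.orthogonal_orthogonal_eq_closure,
      Submodule.mem_orthogonal]
    intro ψ hψ
    have hzero := product_zero (Lp.memLp φ) (Lp.memLp ψ) hlog fun n => by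
      obtain ⟨h, hS, hh⟩ := hpow n
      have h1 := (Submodule.mem_orthogonal _ _).1 hψ h hS
      rw [L2.inner_def] at h1
      rw [← h1]
      refine integral_congr_ae ?_
      filter_upwards [hh] with x hx
      rw [hx, RCLike.inner_apply, map_mul, RCLike.conj_conj]
      ring
    rw [L2.inner_def]
    refine integral_eq_zero_of_ae ?_
    filter_upwards [hzero, hg, hnonzero] with x h1 h2 h3
    by_cases hx : x ∈ E
    · have h4 : ψ x = 0 := by simpa [h3 hx] using h1
      simp [h4]
    · simp [h2 hx]
  · intro h
    refine (mem_L2On hE).1 (h _ (isClosed_L2On E) (fun f hf k hk => ?_) ((mem_L2On hE).2 hvanish))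
    rw [mem_L2On hE] at hf ⊢
    filter_upwards [hf, hk] with x hx hkx hxE
    rw [hkx, hx hxE, mul_zero]

end
end

section
/- Every finite positive Borel measure ν on 𝕋 which is singular with respect to the arclength measure m admits a unique decomposition ν = ν_C + ν_K into two mutually singular positive measures such that: (i) ν_C is concentrated on a countable union E = ∪_k E_k of Beurling–Carleson sets E_k each of arclength measure zero, in the sense that ν_C(B) = ν_C(B ∩ E) for all Borel sets B; and (ii) ν_K(F) = 0 for every Beurling–Carleson set F of arclength measure zero. -/
/-!
The decomposition is an exhaustion argument which uses only two facts about the class of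
null Beurling–Carleson sets: it is nonempty and it consists of measurable sets.

Among all countable unions of such sets, one, say `E`, has maximal `ν`-measure
(`exists_maximal_iUnion`). By maximality and finiteness of `ν`, every further set of the class
is `ν`-null off `E`, so `ν_C = ν|_E` and `ν_K = ν|_{Eᶜ}` work. Conversely, in any admissible
decomposition `ν_C` is the restriction of `ν` to its carrier `E`
(`eq_restrict_of_decomposition`), and two carriers `E`, `E'` agree up to a `ν`-null set, since
`E' \ E` is null for both parts of the decomposition carried by `E`.
-/

open MeasureTheory AddCircle
open scoped ENNReal NNReal

noncomputable section

/-- A closed subset `E` of `𝕋` is a Beurling–Carleson set if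
`∑_k |A_k| log(1/|A_k|) < ∞`, where `𝕋 ∖ E = ∪_k A_k` is the decomposition of the
complement into disjoint open arcs; equivalently (and this is the form used here),
the entropy integral `∫_{𝕋∖E} log(1/dist(x,E)) dm(x)` is finite. -/
def IsBeurlingCarleson (E : Set (AddCircle (2 * Real.pi))) : Prop :=
  IsClosed E ∧
    (∫⁻ x in Eᶜ, ENNReal.ofReal (Real.log (1 / Metric.infDist x E)) ∂m2pi) < ⊤

/-- In a finite measure space, some countable union of sets from a nonempty class of measurable
sets has maximal measure; maximality is stated as: each set of the class is null off that
union. -/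
theorem exists_maximal_iUnion {α : Type*} [MeasurableSpace α] (ν : Measure α) [IsFiniteMeasure ν]
    (C : Set α → Prop) (hne : ∃ F, C F) (hmeas : ∀ F, C F → MeasurableSet F) :
    ∃ E : ℕ → Set α, (∀ k, C (E k)) ∧ ∀ F, C F → ν (F \ ⋃ k, E k) = 0 := by
  obtain ⟨F₀, hF₀⟩ := hne
  let S : Set ℝ≥0∞ := {r | ∃ E : ℕ → Set α, (∀ k, C (E k)) ∧ ν (⋃ k, E k) = r}
  have hSne : S.Nonempty := ⟨_, fun _ => F₀, fun _ => hF₀, rfl⟩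
  obtain ⟨u, -, hu, huS⟩ := exists_seq_tendsto_sSup hSne (OrderTop.bddAbove S)
  choose G hG hGu using huS
  let E : ℕ → Set α := fun n => G n.unpair.1 n.unpair.2
  have hE : ∀ k, C (E k) := fun k => hG _ _
  have hsub : ∀ n, ⋃ k, G n k ⊆ ⋃ k, E k := by
    intro n
    refine Set.iUnion_subset fun k => ?_
    have h : E (Nat.pair n k) = G n k := by simp [E]
    rw [← h]
    exact Set.subset_iUnion E _
  have hmax : sSup S ≤ ν (⋃ k, E k) :=
    le_of_tendsto' hu fun n => by rw [← hGu n]; exact measure_mono (hsub n)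
  refine ⟨E, hE, fun F hF => ?_⟩
  have hmE : MeasurableSet (⋃ k, E k) := MeasurableSet.iUnion fun k => hmeas _ (hE k)
  have hle : ν ((⋃ k, E k) ∪ F) ≤ ν (⋃ k, E k) := by
    let E' : ℕ → Set α := fun n => Nat.casesOn n F E
    have hmem : ν ((⋃ k, E k) ∪ F) ∈ S := by
      refine ⟨E', ?_, ?_⟩
      · rintro (_ | k)
        exacts [hF, hE k]
      · rw [← Set.union_iUnion_nat_succ, Set.union_comm]
        rfl
    exact (le_sSup hmem).trans hmax
  rw [← Set.union_sdiff_self, measure_union Set.disjoint_sdiff_right ((hmeas F hF).diff hmE)] at hle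
  have hle' : ν (⋃ k, E k) + ν (F \ ⋃ k, E k) ≤ ν (⋃ k, E k) + 0 := by simpa using hle
  exact nonpos_iff_eq_zero.1 ((ENNReal.add_le_add_iff_left (measure_ne_top ν _)).1 hle')

/-- If `ν = μ₁ + μ₂` where `μ₁` is carried by `E` and `μ₂` vanishes on `E`, then the two parts
are the restrictions of `ν` to `E` and to its complement. -/
theorem eq_restrict_of_decomposition {α : Type*} [MeasurableSpace α] {ν μ₁ μ₂ : Measure α}
    {E : Set α} (hE : MeasurableSet E) (hν : ν = μ₁ + μ₂)
    (h₁ : ∀ B, MeasurableSet B → μ₁ B = μ₁ (B ∩ E)) (h₂ : μ₂ E = 0) :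
    μ₁ = ν.restrict E ∧ μ₂ = ν.restrict Eᶜ := by
  have h₁' : μ₁ Eᶜ = 0 := by rw [h₁ _ hE.compl]; simp
  constructor
  · rw [hν, Measure.restrict_add, Measure.restrict_eq_zero.2 h₂, add_zero]
    ext B hB
    rw [Measure.restrict_apply hB, h₁ B hB]
  · rw [hν, Measure.restrict_add, Measure.restrict_eq_zero.2 h₁', zero_add]
    refine (Measure.restrict_eq_self_of_ae_mem ?_).symm
    rw [ae_iff]
    simpa using h₂

/-- Every finite positive Borel measure `ν` on `𝕋` singular with respect to arclength
measure admits a unique decomposition `ν = ν_C + ν_K` into mutually singular parts, where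
`ν_C` is concentrated on a countable union of Beurling–Carleson sets of measure zero and
`ν_K` vanishes on every Beurling–Carleson set of measure zero. -/
theorem stmt6 (ν : Measure (AddCircle (2 * Real.pi))) [IsFiniteMeasure ν]
    (hsing : ν ⟂ₘ m2pi) :
    ∃! p : Measure (AddCircle (2 * Real.pi)) × Measure (AddCircle (2 * Real.pi)),
      ν = p.1 + p.2 ∧ p.1 ⟂ₘ p.2 ∧
      (∃ E : ℕ → Set (AddCircle (2 * Real.pi)),
        (∀ k, IsBeurlingCarleson (E k) ∧ m2pi (E k) = 0) ∧
        ∀ B : Set (AddCircle (2 * Real.pi)), MeasurableSet B →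
          p.1 B = p.1 (B ∩ ⋃ k, E k)) ∧
      (∀ F : Set (AddCircle (2 * Real.pi)),
        IsBeurlingCarleson F → m2pi F = 0 → p.2 F = 0) := by
  have hmeas : ∀ F : Set (AddCircle (2 * Real.pi)),
      IsBeurlingCarleson F ∧ m2pi F = 0 → MeasurableSet F := fun F hF => hF.1.1.measurableSet
  have hempty : IsBeurlingCarleson ∅ ∧ m2pi ∅ = 0 := by
    -- `infDist x ∅ = 0` and `log (1 / 0) = 0`, so the entropy integral of `∅` vanishes.
    simp [IsBeurlingCarleson]
  obtain ⟨E, hE, hEmax⟩ := exists_maximal_iUnion ν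
    (fun F => IsBeurlingCarleson F ∧ m2pi F = 0) ⟨∅, hempty⟩ hmeas
  have hmE : MeasurableSet (⋃ k, E k) := MeasurableSet.iUnion fun k => hmeas _ (hE k)
  refine ⟨(ν.restrict (⋃ k, E k), ν.restrict (⋃ k, E k)ᶜ),
    ⟨(Measure.restrict_add_restrict_compl hmE).symm, ?_, ⟨E, hE, ?_⟩, ?_⟩, ?_⟩
  · exact ⟨(⋃ k, E k)ᶜ, hmE.compl, by
      rw [Measure.restrict_apply hmE.compl, Set.compl_inter_self, measure_empty], by
      rw [compl_compl, Measure.restrict_apply hmE, Set.inter_compl_self, measure_empty]⟩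
  · intro B hB
    simp only [Measure.restrict_apply hB, Measure.restrict_apply (hB.inter hmE), Set.inter_assoc,
      Set.inter_self]
  · intro F hF hF0
    rw [Measure.restrict_apply (hmeas F ⟨hF, hF0⟩), ← Set.sdiff_eq]
    exact hEmax F ⟨hF, hF0⟩
  · rintro ⟨q₁, q₂⟩ ⟨hq, -, ⟨E', hE', hcar⟩, hnull⟩
    dsimp only at hq hcar hnull
    have hmE' : MeasurableSet (⋃ k, E' k) := MeasurableSet.iUnion fun k => hmeas _ (hE' k)
    obtain ⟨h₁, h₂⟩ := eq_restrict_of_decomposition hmE' hq hcar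
      (measure_iUnion_null fun k => hnull _ (hE' k).1 (hE' k).2)
    have hdiff : ν ((⋃ k, E' k) \ ⋃ k, E k) = 0 := by
      rw [Set.iUnion_sdiff]
      exact measure_iUnion_null fun k => hEmax _ (hE' k)
    have hdiff' : ν ((⋃ k, E k) \ ⋃ k, E' k) = 0 := by
      rw [Set.iUnion_sdiff]
      refine measure_iUnion_null fun k => ?_
      have h := hnull _ (hE k).1 (hE k).2
      rwa [h₂, Measure.restrict_apply (hmeas _ (hE k)), ← Set.sdiff_eq] at h
    have hae : (⋃ k, E' k) =ᵐ[ν] ⋃ k, E k := ae_eq_set.2 ⟨hdiff, hdiff'⟩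
    rw [h₁, h₂, Measure.restrict_congr_set hae, Measure.restrict_congr_set hae.compl]

end
end
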